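/- Let X be a tree and let f : X → X be a continuous map with zero topological entropy. If (x,y) is an IN-pair of the restricted system (CR(f), f|_{CR(f)}) with x ≠ y, then both ω-limit sets ω_f(x) and ω_f(y) are infinite. -/

import Mathlib

open Set Filter Topology Function
open scoped ENNReal

/-- A subset of a topological space is an *arc* if it is homeomorphic to `[0,1]`. -/
def IsArc {X : Type*} [TopologicalSpace X] (A : Set X) : Prop :=
  Nonempty (A ≃ₜ Set.Icc (0 : ℝ) 1)

/-- A point `p` is an *endpoint* of the arc `A` if `p ∈ A` and `A \ {p}` is connected. -/
def IsArcEndpoint {X : Type*} [TopologicalSpace X] (A : Set X) (p : X) : Prop :=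
  p ∈ A ∧ IsConnected (A \ {p})

/-- A subset is a *simple closed curve* if it is homeomorphic to the unit circle. -/
def IsSimpleClosedCurve {X : Type*} [TopologicalSpace X] (S : Set X) : Prop :=
  Nonempty (S ≃ₜ Metric.sphere (0 : ℂ) 1)

/-- A *tree* is a compact connected metric space which is a union of finitely many arcs,
any two of which are disjoint or intersect only in (one or both of) their endpoints,
and which contains no simple closed curve. -/
def IsTree (X : Type*) [MetricSpace X] : Prop :=
  CompactSpace X ∧ ConnectedSpace X ∧
    (∃ 𝒜 : Finset (Set X), (∀ A ∈ 𝒜, IsArc A) ∧ ⋃₀ (𝒜 : Set (Set X)) = Set.univ ∧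
      ∀ A ∈ 𝒜, ∀ B ∈ 𝒜, A ≠ B → ∀ p ∈ A ∩ B, IsArcEndpoint A p ∧ IsArcEndpoint B p) ∧
    ∀ S : Set X, ¬ IsSimpleClosedCurve S

/-- A *dendrite* is a locally connected continuum containing no simple closed curve. -/
def IsDendrite (X : Type*) [MetricSpace X] : Prop :=
  CompactSpace X ∧ ConnectedSpace X ∧ LocallyConnectedSpace X ∧
    ∀ S : Set X, ¬ IsSimpleClosedCurve S

/-- `𝒰` is a finite open cover of the subset `Y`. -/
def IsOpenCoverOn {X : Type*} [TopologicalSpace X] (Y : Set X) (𝒰 : Finset (Set X)) : Prop :=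
  (∀ U ∈ 𝒰, IsOpen U) ∧ Y ⊆ ⋃₀ (𝒰 : Set (Set X))

/-- `N(⋁_{i=1}^n f^{-a_i}(𝒰))`, relative to the subset `Y`: the minimal number `m` of elements
of the join cover `⋁_{i=1}^n f^{-a_i}(𝒰)` needed to cover `Y`. -/
noncomputable def seqCoverCountOn {X : Type*} (f : X → X) (Y : Set X) (a : ℕ → ℕ)
    (𝒰 : Finset (Set X)) (n : ℕ) : ℕ :=
  sInf { m | ∃ c : Fin m → Fin n → Set X, (∀ j i, c j i ∈ 𝒰) ∧
    Y ⊆ ⋃ j, ⋂ i, f^[a i.1] ⁻¹' c j i }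

/-- Topological sequence entropy of `f` restricted to the (invariant) subset `Y`,
with respect to the sequence `a`. -/
noncomputable def seqEntropyOn {X : Type*} [TopologicalSpace X] (f : X → X) (Y : Set X)
    (a : ℕ → ℕ) : ℝ≥0∞ :=
  ⨆ (𝒰 : Finset (Set X)) (_ : IsOpenCoverOn Y 𝒰),
    Filter.limsup
      (fun n : ℕ => ENNReal.ofReal (Real.log (seqCoverCountOn f Y a 𝒰 n) / n)) Filter.atTop

/-- Topological sequence entropy of `f : X → X` with respect to the sequence `a`. -/
noncomputable def seqEntropy {X : Type*} [TopologicalSpace X] (f : X → X) (a : ℕ → ℕ) : ℝ≥0∞ :=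
  seqEntropyOn f Set.univ a

/-- The ordinary topological entropy `h(f)`, i.e. the sequence entropy for `A = (0,1,2,…)`. -/
noncomputable def topEntropy {X : Type*} [TopologicalSpace X] (f : X → X) : ℝ≥0∞ :=
  seqEntropy f id

/-- `h_∞(f|_Y)`: the supremum over all strictly increasing sequences of positive integers of
the topological sequence entropies of `f` restricted to `Y`. -/
noncomputable def supSeqEntropyOn {X : Type*} [TopologicalSpace X] (f : X → X) (Y : Set X) :
    ℝ≥0∞ :=
  ⨆ (a : ℕ → ℕ) (_ : StrictMono a) (_ : 1 ≤ a 0), seqEntropyOn f Y a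

/-- `h_∞(f)`: the supremum of the topological sequence entropies of `f`. -/
noncomputable def supSeqEntropy {X : Type*} [TopologicalSpace X] (f : X → X) : ℝ≥0∞ :=
  supSeqEntropyOn f Set.univ

/-- The ω-limit set `ω_f(x) = ⋂_n closure {f^k(x) : k ≥ n}`. -/
def omegaLimitSet {X : Type*} [TopologicalSpace X] (f : X → X) (x : X) : Set X :=
  ⋂ n : ℕ, closure ((fun k => f^[k] x) '' Set.Ici n)

/-- `ω(f) = ⋃_x ω_f(x)`. -/
def omegaSet {X : Type*} [TopologicalSpace X] (f : X → X) : Set X :=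
  ⋃ x : X, omegaLimitSet f x

/-- The non-wandering set `Ω(f)`. -/
def nonWanderingSet {X : Type*} [TopologicalSpace X] (f : X → X) : Set X :=
  { x | ∀ U : Set X, IsOpen U → x ∈ U → ∃ n, 1 ≤ n ∧ (f^[n] ⁻¹' U ∩ U).Nonempty }

/-- There is an ε-chain from `x` to `y` under `f`. -/
def EpsChain {X : Type*} [MetricSpace X] (f : X → X) (ε : ℝ) (x y : X) : Prop :=
  ∃ n, 1 ≤ n ∧ ∃ c : ℕ → X, c 0 = x ∧ c n = y ∧ ∀ i < n, dist (f (c i)) (c (i + 1)) < ε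

/-- The chain recurrent set `CR(f)`. -/
def chainRecurrentSet {X : Type*} [MetricSpace X] (f : X → X) : Set X :=
  { x | ∀ ε > 0, EpsChain f ε x x }

/-- The chain recurrent set of the restriction `f|_Y`: chain recurrence witnessed by
ε-chains lying entirely inside `Y`. -/
def chainRecurrentSetOn {X : Type*} [MetricSpace X] (f : X → X) (Y : Set X) : Set X :=
  { x ∈ Y | ∀ ε > 0, ∃ n, 1 ≤ n ∧ ∃ c : ℕ → X, c 0 = x ∧ c n = x ∧
      (∀ i ≤ n, c i ∈ Y) ∧ ∀ i < n, dist (f (c i)) (c (i + 1)) < ε }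

/-- `I` is a periodic arc of `f` of period `s`: an arc with `f^s(I) ⊆ I` whose iterates
`I, f(I), …, f^{s-1}(I)` are pairwise disjoint. -/
def IsPeriodicArc {X : Type*} [TopologicalSpace X] (f : X → X) (I : Set X) (s : ℕ) : Prop :=
  IsArc I ∧ 1 ≤ s ∧ Set.MapsTo f^[s] I I ∧
    ∀ i j, i < j → j < s → Disjoint (f^[i] '' I) (f^[j] '' I)

/-- `Orb_f(I) = I ∪ f(I) ∪ … ∪ f^{s-1}(I)`. -/
def arcOrbit {X : Type*} (f : X → X) (I : Set X) (s : ℕ) : Set X :=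
  ⋃ i ∈ Finset.range s, f^[i] '' I

/-- `I` is an independence set for the pair `(U, V)` under `f`. -/
def IsIndepSetPair {X : Type*} (f : X → X) (U V : Set X) (I : Finset ℕ) : Prop :=
  ∀ J ⊆ I, J.Nonempty → ∀ s : ℕ → Bool,
    (⋂ j ∈ J, f^[j] ⁻¹' (if s j then U else V)).Nonempty

/-- `(x, y)` is an IN-pair of `(X, f)`. -/
def INPair {X : Type*} [TopologicalSpace X] (f : X → X) (x y : X) : Prop :=
  ∀ U ∈ nhds x, ∀ V ∈ nhds y, ∀ m : ℕ, ∃ I : Finset ℕ, m ≤ I.card ∧ IsIndepSetPair f U V I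

/-- The set `IN(X, f)` of IN-pairs of `(X, f)`. -/
def INPairs {X : Type*} [TopologicalSpace X] (f : X → X) : Set (X × X) :=
  { p | INPair f p.1 p.2 }

/-- `(x, y)` is an IN-pair of the restricted (sub)system `(Y, f|_Y)`, for `Y` invariant. -/
def INPairOn {X : Type*} [TopologicalSpace X] (f : X → X) (Y : Set X) (x y : X) : Prop :=
  x ∈ Y ∧ y ∈ Y ∧ ∀ U ∈ nhds x, ∀ V ∈ nhds y, ∀ m : ℕ, ∃ I : Finset ℕ, m ≤ I.card ∧
    ∀ J ⊆ I, J.Nonempty → ∀ s : ℕ → Bool,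
      (Y ∩ ⋂ j ∈ J, f^[j] ⁻¹' (if s j then U else V)).Nonempty

/-- `(x, y)` is a Li–Yorke pair for `f`. -/
def LiYorkePair {X : Type*} [MetricSpace X] (f : X → X) (x y : X) : Prop :=
  Filter.liminf (fun n : ℕ => dist (f^[n] x) (f^[n] y)) Filter.atTop = 0 ∧
    0 < Filter.limsup (fun n : ℕ => dist (f^[n] x) (f^[n] y)) Filter.atTop

/-!
Suppose `ω_f(x)` is finite. Then the orbit of `x` converges along some iterate `f^[N]` to a fixed
point `p` of `f^[N]`. Large independence sets contain two times that are congruent modulo any given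
number, so independence provides, for all iterates of `f^[N]`, orbits that start near `p`
and reach a given neighbourhood of a point `w ≠ p`, and, at common times, orbits from near `w` both
to `w` and to `p`; here `w` is `y` if `x = p`, and `x` otherwise. In a tree only finitely many arcs
issue from `p`, so one of these directions is expanded by an iterate and its unstable branch
accumulates at `w`. If the orbit of `w` enters the interior of this branch, then the branch is
stretched away from `p`, across a neighbourhood of a point of this orbit, and back to `p`;
otherwise the orbit stays in the finite frontier of the branch, `w` is eventually periodic, and two
periodic points lie in the closure of each other's unstable branches. Either way some iterate of `f`
has a horseshoe, and a horseshoe forces positive entropy.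
-/

section Hull

variable {X : Type*} [TopologicalSpace X] {a b : X}

/-- The arc between `a` and `b` in a tree, described without parametrization as the intersection of
all preconnected sets containing both points. With `p` fixed, `x ∈ hull p y` is the partial order
of the tree rooted at `p`. -/
def hull (a b : X) : Set X :=
  ⋂₀ {S | IsPreconnected S ∧ a ∈ S ∧ b ∈ S}

lemma hull_subset {S : Set X} (hS : IsPreconnected S) (ha : a ∈ S) (hb : b ∈ S) : hull a b ⊆ S :=
  sInter_subset_of_mem ⟨hS, ha, hb⟩

lemma left_mem_hull (a b : X) : a ∈ hull a b := fun _ h => h.2.1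

lemma right_mem_hull (a b : X) : b ∈ hull a b := fun _ h => h.2.2

lemma hull_comm (a b : X) : hull a b = hull b a := by
  simp only [hull, and_comm (a := a ∈ _)]

lemma hull_self (a : X) : hull a a = {a} :=
  Subset.antisymm (hull_subset isPreconnected_singleton rfl rfl)
    (singleton_subset_iff.2 (left_mem_hull a a))

/-- `γ`, restricted to `[0,1]`, parametrizes an arc from `a` to `b` inside `Y` which lies in every
preconnected subset of `Y` containing `a` and `b`. -/
structure IsMinimalArc (Y : Set X) (γ : ℝ → X) (a b : X) : Prop where
  continuousOn : ContinuousOn γ (Icc 0 1)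
  injOn : InjOn γ (Icc 0 1)
  source : γ 0 = a
  target : γ 1 = b
  image_subset : γ '' Icc 0 1 ⊆ Y
  minimal : ∀ S ⊆ Y, IsPreconnected S → a ∈ S → b ∈ S → γ '' Icc 0 1 ⊆ S

/-- Any two distinct points of `Y` are joined by an arc in `Y` that lies in every preconnected
subset of `Y` containing them. -/
def UniquelyArcConnected (Y : Set X) : Prop :=
  ∀ a ∈ Y, ∀ b ∈ Y, a ≠ b → ∃ γ, IsMinimalArc Y γ a b

lemma IsMinimalArc.isPreconnected_image {Y : Set X} {γ : ℝ → X} (h : IsMinimalArc Y γ a b)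
    {s t : ℝ} (hs : 0 ≤ s) (ht : t ≤ 1) : IsPreconnected (γ '' Icc s t) :=
  isPreconnected_Icc.image _ (h.continuousOn.mono (Icc_subset_Icc hs ht))

lemma IsMinimalArc.hull_eq_image {γ : ℝ → X} (h : IsMinimalArc univ γ a b) {s t : ℝ} (hs : 0 ≤ s)
    (hst : s ≤ t) (ht : t ≤ 1) : hull (γ s) (γ t) = γ '' Icc s t := by
  refine Subset.antisymm (hull_subset (h.isPreconnected_image hs ht)
    (mem_image_of_mem _ (left_mem_Icc.2 hst)) (mem_image_of_mem _ (right_mem_Icc.2 hst))) ?_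
  rintro _ ⟨r, hr, rfl⟩ S ⟨hS, hsS, htS⟩
  have hr01 : r ∈ Icc (0 : ℝ) 1 := ⟨hs.trans hr.1, hr.2.trans ht⟩
  -- minimality applies to `S` only after prolonging it to the endpoints of the arc
  have hext : IsPreconnected ((γ '' Icc 0 s ∪ S) ∪ γ '' Icc t 1) :=
    ((h.isPreconnected_image le_rfl (hst.trans ht)).union (γ s)
      (mem_image_of_mem _ (right_mem_Icc.2 hs)) hsS hS).union (γ t) (Or.inr htS)
      (mem_image_of_mem _ (left_mem_Icc.2 ht)) (h.isPreconnected_image (hs.trans hst) le_rfl)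
  rcases h.minimal _ (subset_univ _) hext (Or.inl (Or.inl ⟨0, ⟨le_rfl, hs⟩, h.source⟩))
    (Or.inr ⟨1, ⟨ht, le_rfl⟩, h.target⟩) (mem_image_of_mem γ hr01) with
    (⟨q, hq, hqr⟩ | hrS) | ⟨q, hq, hqr⟩
  · obtain rfl : q = r := h.injOn ⟨hq.1, hq.2.trans (hst.trans ht)⟩ hr01 hqr
    rwa [le_antisymm hq.2 hr.1]
  · exact hrS
  · obtain rfl : q = r := h.injOn ⟨(hs.trans hst).trans hq.1, hq.2⟩ hr01 hqr
    rwa [le_antisymm hr.2 hq.1]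

lemma IsMinimalArc.hull_eq {γ : ℝ → X} (h : IsMinimalArc univ γ a b) :
    hull a b = γ '' Icc 0 1 := by
  rw [← h.hull_eq_image le_rfl zero_le_one le_rfl, h.source, h.target]

lemma IsMinimalArc.hull_left_eq_image {γ : ℝ → X} (h : IsMinimalArc univ γ a b) {t : ℝ}
    (ht : t ∈ Icc (0 : ℝ) 1) : hull a (γ t) = γ '' Icc 0 t := by
  rw [← h.hull_eq_image le_rfl ht.1 ht.2, h.source]

end Hull

/-- The topological properties of trees on which the dynamical argument rests: unique arcs, finite
stars of arcs as neighbourhoods, and finite boundaries of preconnected sets. -/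
structure TreeLike (X : Type*) [TopologicalSpace X] : Prop where
  uniquelyArcConnected : UniquelyArcConnected (univ : Set X)
  exists_star : ∀ p : X, ∃ S : Finset X, p ∉ S ∧ (⋃ s ∈ S, hull p s) ∈ 𝓝 p
  finite_frontier : ∀ C : Set X, IsPreconnected C → (frontier C).Finite

namespace TreeLike

variable {X : Type*} [TopologicalSpace X] {a b c d p w : X}

lemma exists_isMinimalArc (T : TreeLike X) (h : a ≠ b) : ∃ γ, IsMinimalArc univ γ a b :=
  T.uniquelyArcConnected a (mem_univ _) b (mem_univ _) h

lemma isPreconnected_hull (T : TreeLike X) (a b : X) : IsPreconnected (hull a b) := by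
  rcases eq_or_ne a b with rfl | h
  · exact hull_self a ▸ isPreconnected_singleton
  · obtain ⟨γ, hγ⟩ := T.exists_isMinimalArc h
    exact hγ.hull_eq ▸ hγ.isPreconnected_image le_rfl le_rfl

lemma hull_subset_hull (T : TreeLike X) (hc : c ∈ hull a b) (hd : d ∈ hull a b) :
    hull c d ⊆ hull a b :=
  hull_subset (T.isPreconnected_hull a b) hc hd

lemma hull_subset_hull_left (T : TreeLike X) (hc : c ∈ hull a b) : hull a c ⊆ hull a b :=
  T.hull_subset_hull (left_mem_hull _ _) hc

lemma hull_subset_union (T : TreeLike X) (a b c : X) : hull a b ⊆ hull a c ∪ hull c b :=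
  hull_subset ((T.isPreconnected_hull a c).union c (right_mem_hull _ _) (left_mem_hull _ _)
    (T.isPreconnected_hull c b)) (Or.inl (left_mem_hull _ _)) (Or.inr (right_mem_hull _ _))

lemma eq_of_mem_hull_of_mem_hull (T : TreeLike X) {h x : X} (hh : h ∈ hull p b)
    (h₁ : x ∈ hull p h) (h₂ : x ∈ hull h b) : x = h := by
  rcases eq_or_ne p b with rfl | hpb
  · rw [hull_self, mem_singleton_iff] at hh
    rwa [hh, hull_self, ← hh] at h₁
  obtain ⟨γ, hγ⟩ := T.exists_isMinimalArc hpb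
  rw [hγ.hull_eq] at hh
  obtain ⟨t, ht, rfl⟩ := hh
  rw [hγ.hull_left_eq_image ht] at h₁
  rw [← hγ.target, hγ.hull_eq_image ht.1 ht.2 le_rfl] at h₂
  obtain ⟨u, hu, rfl⟩ := h₁
  obtain ⟨v, hv, hvu⟩ := h₂
  obtain rfl : v = u := hγ.injOn ⟨ht.1.trans hv.1, hv.2⟩ ⟨hu.1, hu.2.trans ht.2⟩ hvu
  rw [le_antisymm hu.2 hv.1]

lemma hull_antisymm (T : TreeLike X) (hab : a ∈ hull p b) (hba : b ∈ hull p a) : a = b :=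
  (T.eq_of_mem_hull_of_mem_hull hab hba (right_mem_hull _ _)).symm

lemma mem_hull_of_mem_hull_of_mem_hull (T : TreeLike X) (ha : a ∈ hull p b) (hb : b ∈ hull p c) :
    b ∈ hull a c := by
  rcases T.hull_subset_union p c a hb with h | h
  · exact T.hull_antisymm ha h ▸ left_mem_hull _ _
  · exact h

lemma disjoint_hull_hull (T : TreeLike X) (ha : a ∈ hull p b) (hb : b ∈ hull p c) (hne : a ≠ b) :
    Disjoint (hull p a) (hull b c) := by
  refine disjoint_left.2 fun x hxa hxb => hne ?_
  obtain rfl : x = b := T.eq_of_mem_hull_of_mem_hull hb (T.hull_subset_hull_left ha hxa) hxb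
  exact T.hull_antisymm ha hxa

lemma hull_total (T : TreeLike X) (ha : a ∈ hull p c) (hb : b ∈ hull p c) :
    a ∈ hull p b ∨ b ∈ hull p a := by
  rcases eq_or_ne p c with rfl | hpc
  · rw [hull_self, mem_singleton_iff] at ha
    exact Or.inl (ha ▸ left_mem_hull _ _)
  obtain ⟨γ, hγ⟩ := T.exists_isMinimalArc hpc
  rw [hγ.hull_eq] at ha hb
  obtain ⟨s, hs, rfl⟩ := ha
  obtain ⟨t, ht, rfl⟩ := hb
  rw [hγ.hull_left_eq_image hs, hγ.hull_left_eq_image ht]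
  exact (le_total s t).imp (fun h => mem_image_of_mem γ ⟨hs.1, h⟩)
    (fun h => mem_image_of_mem γ ⟨ht.1, h⟩)

lemma left_notMem_hull (T : TreeLike X) (ha : a ∈ hull p b) (hne : a ≠ p) : p ∉ hull a b :=
  fun hp => hne (T.eq_of_mem_hull_of_mem_hull ha (left_mem_hull _ _) hp).symm

lemma exists_mem_hull_subset (T : TreeLike X) (h : a ≠ p) {U : Set X} (hU : U ∈ 𝓝 p) :
    ∃ b ∈ hull p a, b ≠ p ∧ hull p b ⊆ U := by
  obtain ⟨γ, hγ⟩ := T.exists_isMinimalArc h.symm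
  have h0 : (0 : ℝ) ∈ Icc (0 : ℝ) 1 := left_mem_Icc.2 zero_le_one
  have hγU : γ ⁻¹' U ∈ 𝓝[≥] (0 : ℝ) := by
    rw [← nhdsWithin_Icc_eq_nhdsGE zero_lt_one]
    exact hγ.continuousOn 0 h0 (by rwa [hγ.source])
  obtain ⟨u, hu, hsub⟩ := mem_nhdsGE_iff_exists_Icc_subset.1 hγU
  have hm : min u 1 ∈ Icc (0 : ℝ) 1 := ⟨le_min hu.le zero_le_one, min_le_right _ _⟩
  refine ⟨γ (min u 1), hγ.hull_eq ▸ mem_image_of_mem γ hm, fun he => ?_, ?_⟩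
  · exact (lt_min hu one_pos).ne' (hγ.injOn hm h0 (he.trans hγ.source.symm))
  · rw [hγ.hull_left_eq_image hm]
    exact image_subset_iff.2 ((Icc_subset_Icc_right (min_le_left _ _)).trans hsub)

lemma exists_mem_hull_forall_notMem (T : TreeLike X) (hc : c ∈ hull p w) (hpw : p ≠ w)
    {M : Set X} (hM : M ∈ 𝓝 w) (hcM : c ∉ M) :
    ∃ v ∈ hull p w, v ≠ w ∧ c ∈ hull p v ∧ ∀ x ∈ hull p w, x ∉ hull p c → x ∉ M → x ∈ hull c v := by
  obtain ⟨v, hv, hvw, hvM⟩ := T.exists_mem_hull_subset hpw hM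
  have hmem : ∀ x ∈ hull p w, x ∉ M → x ∈ hull p v := fun x hx hxM =>
    (T.hull_subset_union p w v hx).resolve_right fun h => hxM (hvM (hull_comm v w ▸ h))
  exact ⟨v, hull_comm w p ▸ hv, hvw, hmem c hc hcM, fun x hx hxc hxM =>
    (T.hull_subset_union p v c (hmem x hx hxM)).resolve_left hxc⟩

lemma isPreconnected_hull_diff (T : TreeLike X) (h : b ≠ p) : IsPreconnected (hull p b \ {p}) := by
  obtain ⟨γ, hγ⟩ := T.exists_isMinimalArc h.symm
  have hdiff : hull p b \ {p} = γ '' Ioc 0 1 := by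
    rw [hγ.hull_eq, ← Icc_sdiff_left, hγ.injOn.image_sdiff,
      inter_eq_right.2 (singleton_subset_iff.2 (left_mem_Icc.2 zero_le_one)), image_singleton,
      hγ.source]
  rw [hdiff]
  exact isPreconnected_Ioc.image _ (hγ.continuousOn.mono Ioc_subset_Icc_self)

lemma isPreconnected_star (T : TreeLike X) (p : X) (S : Finset X) :
    IsPreconnected (⋃ s ∈ S, hull p s) := by
  rw [show (⋃ s ∈ S, hull p s) = ⋃₀ (hull p '' S) from (sUnion_image _ _).symm]
  refine isPreconnected_sUnion p _ ?_ ?_ <;> rintro _ ⟨s, -, rfl⟩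
  exacts [left_mem_hull _ _, T.isPreconnected_hull _ _]

lemma isCompact_hull (T : TreeLike X) (a b : X) : IsCompact (hull a b) := by
  rcases eq_or_ne a b with rfl | h
  · exact hull_self a ▸ isCompact_singleton
  · obtain ⟨γ, hγ⟩ := T.exists_isMinimalArc h
    exact hγ.hull_eq ▸ isCompact_Icc.image_of_continuousOn hγ.continuousOn

section T2

variable [T2Space X]

lemma isClosed_hull (T : TreeLike X) (a b : X) : IsClosed (hull a b) :=
  (T.isCompact_hull a b).isClosed

lemma exists_median (T : TreeLike X) (a b c : X) :
    ∃ m, m ∈ hull a b ∧ m ∈ hull a c ∧ m ∈ hull b c := by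
  obtain ⟨m, hbc, hba, hac⟩ := isPreconnected_closed_iff.1 (T.isPreconnected_hull b c) (hull b a)
    (hull a c) (T.isClosed_hull _ _) (T.isClosed_hull _ _) (T.hull_subset_union b c a)
    ⟨b, left_mem_hull _ _, left_mem_hull _ _⟩ ⟨c, right_mem_hull _ _, right_mem_hull _ _⟩
  exact ⟨m, hull_comm b a ▸ hba, hac, hbc⟩

lemma exists_mem_hull_ne_ne (T : TreeLike X) (h : a ≠ p) : ∃ b ∈ hull p a, b ≠ p ∧ b ≠ a := by
  obtain ⟨b, hb, hbp, hsub⟩ := T.exists_mem_hull_subset h (isOpen_ne.mem_nhds h.symm)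
  exact ⟨b, hb, hbp, hsub (right_mem_hull _ _)⟩

lemma iUnion_hull_mem_nhds (T : TreeLike X) {S : Finset X} (hS : (⋃ s ∈ S, hull p s) ∈ 𝓝 p)
    {e : X → X} (he : ∀ s ∈ S, e s ∈ hull p s) (hep : ∀ s ∈ S, e s ≠ p) :
    (⋃ s ∈ S, hull p (e s)) ∈ 𝓝 p := by
  have hcut : (⋂ s ∈ S, (hull (e s) s)ᶜ) ∈ 𝓝 p :=
    (Filter.biInter_finset_mem S).2 fun s hs =>
      (T.isClosed_hull _ _).isOpen_compl.mem_nhds (T.left_notMem_hull (he s hs) (hep s hs))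
  filter_upwards [hS, hcut] with x hxS hxcut
  obtain ⟨s, hs, hxs⟩ := mem_iUnion₂.1 hxS
  exact mem_iUnion₂.2
    ⟨s, hs, (T.hull_subset_union p s (e s) hxs).resolve_right (mem_iInter₂.1 hxcut s hs)⟩

lemma exists_star_subset (T : TreeLike X) {U : Set X} (hU : U ∈ 𝓝 p) :
    ∃ S : Finset X, (⋃ s ∈ S, hull p s) ∈ 𝓝 p ∧ (⋃ s ∈ S, hull p s) ⊆ U := by
  classical
  obtain ⟨S, hpS, hS⟩ := T.exists_star p
  have : Nonempty X := ⟨p⟩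
  choose! e he hep heU using fun s (hs : s ∈ S) =>
    T.exists_mem_hull_subset (ne_of_mem_of_not_mem hs hpS) hU
  refine ⟨S.image e, ?_⟩
  rw [Finset.set_biUnion_finset_image]
  exact ⟨T.iUnion_hull_mem_nhds hS he hep, iUnion₂_subset heU⟩

lemma exists_nhds_mem_hull (T : TreeLike X) (p w : X) :
    ∃ N ∈ 𝓝 w, ∀ x ∈ N, w ∉ hull p x → x ∈ hull p w := by
  obtain ⟨S, hwS, hS⟩ := T.exists_star w
  have hbranch : ∀ s ∈ S, ∃ e ∈ hull w s, e ≠ w ∧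
      ∀ m ∈ hull w e, m ≠ w → m ∈ hull w p → e ∈ hull w p := by
    intro s hs
    by_cases hm : ∃ m ∈ hull w s, m ≠ w ∧ m ∈ hull w p
    · obtain ⟨m, hms, hmw, hmp⟩ := hm
      exact ⟨m, hms, hmw, fun _ _ _ _ => hmp⟩
    · exact ⟨s, right_mem_hull _ _, ne_of_mem_of_not_mem hs hwS,
        fun m hms hmw hmp => absurd ⟨m, hms, hmw, hmp⟩ hm⟩
  have : Nonempty X := ⟨w⟩
  choose! e he hew hep using hbranch
  refine ⟨_, T.iUnion_hull_mem_nhds hS he hew, fun x hx hwx => ?_⟩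
  obtain ⟨s, hs, hxs⟩ := mem_iUnion₂.1 hx
  obtain ⟨m, hmp, hmx, hpx⟩ := T.exists_median w p x
  have hesp : e s ∈ hull w p := hep s hs m (T.hull_subset_hull_left hxs hmx)
    (ne_of_mem_of_not_mem hpx hwx) hmp
  exact hull_comm w p ▸ T.hull_subset_hull_left hesp hxs

end T2

end TreeLike

section Horseshoe

variable {X : Type*} [TopologicalSpace X] {f : X → X}

/-- Two disjoint nonempty closed sets, each of which is mapped across both by some iterate of
`f`. -/
def HasHorseshoe (f : X → X) : Prop :=
  ∃ (S₁ S₂ : Set X) (n : ℕ), IsClosed S₁ ∧ IsClosed S₂ ∧ Disjoint S₁ S₂ ∧ S₁.Nonempty ∧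
    S₁ ∪ S₂ ⊆ f^[n] '' S₁ ∧ S₁ ∪ S₂ ⊆ f^[n] '' S₂

lemma HasHorseshoe.of_iterate {k : ℕ} (h : HasHorseshoe f^[k]) : HasHorseshoe f := by
  obtain ⟨S₁, S₂, n, h₁, h₂, hd, hne, hc₁, hc₂⟩ := h
  exact ⟨S₁, S₂, k * n, h₁, h₂, hd, hne, by rwa [iterate_mul], by rwa [iterate_mul]⟩

lemma subset_image_iterate {α : Type*} {g : α → α} {S A : Set α} (hS : S ⊆ A) (h : A ⊆ g '' S)
    {n : ℕ} (hn : n ≠ 0) : A ⊆ g^[n] '' S := by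
  induction n, Nat.one_le_iff_ne_zero.2 hn using Nat.le_induction with
  | base => simpa using h
  | succ n hn ih =>
    rw [iterate_succ, image_comp]
    exact (ih (by omega)).trans (image_mono (hS.trans h))

lemma HasHorseshoe.of_subset_image {A S₁ S₂ : Set X} {m n : ℕ} (hA : A.Nonempty)
    (h₁ : IsClosed S₁) (h₂ : IsClosed S₂) (hd : Disjoint S₁ S₂) (hS₁ : S₁ ⊆ A) (hS₂ : S₂ ⊆ A)
    (hc₁ : A ⊆ f^[m] '' S₁) (hc₂ : A ⊆ f^[n] '' S₂) : HasHorseshoe f := by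
  have hne₁ : S₁.Nonempty := (hA.mono hc₁).of_image
  have hne₂ : S₂.Nonempty := (hA.mono hc₂).of_image
  have hm : m ≠ 0 := by
    rintro rfl
    rw [iterate_zero, image_id] at hc₁
    exact hne₂.ne_empty (hd.symm.eq_bot_of_le (hS₂.trans hc₁))
  have hn : n ≠ 0 := by
    rintro rfl
    rw [iterate_zero, image_id] at hc₂
    exact hne₁.ne_empty (hd.eq_bot_of_le (hS₁.trans hc₂))
  refine ⟨S₁, S₂, m * n, h₁, h₂, hd, hne₁, (union_subset hS₁ hS₂).trans ?_,
    (union_subset hS₁ hS₂).trans ?_⟩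
  · exact iterate_mul f m n ▸ subset_image_iterate hS₁ hc₁ hn
  · exact mul_comm m n ▸ iterate_mul f n m ▸ subset_image_iterate hS₂ hc₂ hm

lemma HasHorseshoe.of_subset_image_of_subset_image (hf : Continuous f) {A H₁ H₂ : Set X}
    {m n q : ℕ} (hAc : IsClosed A) (hA : A.Nonempty) (h₁ : IsClosed H₁) (h₂ : IsClosed H₂)
    (hd : Disjoint H₁ H₂) (hc₁ : A ⊆ f^[m] '' H₁) (hc₂ : A ⊆ f^[n] '' H₂)
    (hH₁ : H₁ ⊆ f^[q] '' A) (hH₂ : H₂ ⊆ f^[q] '' A) : HasHorseshoe f := by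
  have hpull : ∀ {H : Set X} {k : ℕ}, H ⊆ f^[q] '' A → A ⊆ f^[k] '' H →
      A ⊆ f^[k + q] '' (A ∩ f^[q] ⁻¹' H) := fun hH hk => by
    rwa [iterate_add, image_comp, image_inter_preimage, inter_eq_right.2 hH]
  exact .of_subset_image hA (hAc.inter (h₁.preimage (hf.iterate q)))
    (hAc.inter (h₂.preimage (hf.iterate q)))
    ((hd.preimage _).mono inter_subset_right inter_subset_right) inter_subset_left
    inter_subset_left (hpull hH₁ hc₁) (hpull hH₂ hc₂)

end Horseshoe

section Expanding

variable {X : Type*} [TopologicalSpace X] {f : X → X} {a b c p : X}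

namespace TreeLike

lemma hull_subset_image_iterate (T : TreeLike X) (hf : Continuous f) (n : ℕ) (a b : X) :
    hull (f^[n] a) (f^[n] b) ⊆ f^[n] '' hull a b :=
  hull_subset ((T.isPreconnected_hull a b).image _ (hf.iterate n).continuousOn)
    (mem_image_of_mem _ (left_mem_hull _ _)) (mem_image_of_mem _ (right_mem_hull _ _))

lemma hull_subset_image_iterate_of_mem (T : TreeLike X) (hf : Continuous f) (hp : f p = p) {n : ℕ}
    (h : b ∈ f^[n] '' hull p a) : hull p b ⊆ f^[n] '' hull p a :=
  hull_subset ((T.isPreconnected_hull p a).image _ (hf.iterate n).continuousOn)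
    ⟨p, left_mem_hull _ _, iterate_fixed hp n⟩ h

lemma hull_subset_of_isPreconnected (T : TreeLike X) {V B : Set X} (hV : IsPreconnected V)
    (hB : IsPreconnected B) (hpV : p ∈ V) {x y : X} (hxV : x ∈ V) (hxB : x ∈ B) (hyB : y ∈ B)
    (hb : b ∈ hull p y) (hc : c ∈ hull p b) (hd : Disjoint (hull c b) V) : hull c b ⊆ B :=
  fun _ hz => (hull_subset (hV.union x hxV hxB hB) (Or.inl hpV) (Or.inr hyB)
    (T.hull_subset_hull_left hb (T.hull_subset_hull hc (right_mem_hull _ _) hz))).resolve_left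
    (disjoint_left.1 hd hz)

end TreeLike

/-- Every subarc of `hull p b` starting at `p` is eventually stretched by `f` beyond `b`. -/
def IsExpanding (f : X → X) (p b : X) : Prop :=
  ∀ a ∈ hull p b, a ≠ p → ∃ i, b ∈ f^[i] '' hull p a

namespace IsExpanding

lemma exists_hull_covers (T : TreeLike X) (hf : Continuous f) (hp : f p = p)
    (h : IsExpanding f p b) {A : Set X} (hA : IsClosed A) (hpA : p ∉ A) {j : ℕ}
    (hAj : A ⊆ f^[j] '' hull p b) (hc : c ∈ hull p b) (hcp : c ≠ p) :
    ∃ n, ∃ d ∈ hull p c, d ≠ p ∧ A ⊆ f^[n] '' hull d c := by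
  obtain ⟨i, hi⟩ := h c hc hcp
  have hAn : A ⊆ f^[j + i] '' hull p c := by
    rw [iterate_add, image_comp]
    exact hAj.trans (image_mono (T.hull_subset_image_iterate_of_mem hf hp hi))
  have hU : f^[j + i] ⁻¹' Aᶜ ∈ 𝓝 p := (hf.iterate _).continuousAt.preimage_mem_nhds
    (by rw [iterate_fixed hp]; exact hA.isOpen_compl.mem_nhds hpA)
  obtain ⟨d, hd, hdp, hdU⟩ := T.exists_mem_hull_subset hcp hU
  refine ⟨j + i, d, hd, hdp, fun x hx => ?_⟩
  obtain ⟨y, hy, rfl⟩ := hAn hx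
  exact ⟨y, (T.hull_subset_union p c d hy).resolve_left fun hyd => hdU hyd hx, rfl⟩

lemma exists_pos_mem_image [T2Space X] (T : TreeLike X) (h : IsExpanding f p b) (hbp : b ≠ p) :
    ∃ i ≠ 0, b ∈ f^[i] '' hull p b := by
  obtain ⟨a, ha, hap, hab⟩ := T.exists_mem_hull_ne_ne hbp
  obtain ⟨i, hi⟩ := h a ha hap
  refine ⟨i, ?_, image_mono (T.hull_subset_hull_left ha) hi⟩
  rintro rfl
  rw [iterate_zero, image_id] at hi
  exact hab (T.hull_antisymm ha hi)

theorem hasHorseshoe_of_iterate_eq [T2Space X] (T : TreeLike X) (hf : Continuous f) (hp : f p = p)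
    (h : IsExpanding f p b) (hbp : b ≠ p) {j : ℕ} (hj : f^[j] b = p) : HasHorseshoe f := by
  obtain ⟨i, hi0, hi⟩ := h.exists_pos_mem_image T hbp
  set n := i * (j + 1) with hn
  have hcover : hull p b ⊆ f^[n] '' hull p b := by
    rw [hn, iterate_mul]
    exact subset_image_iterate Subset.rfl (T.hull_subset_image_iterate_of_mem hf hp hi)
      j.succ_ne_zero
  obtain ⟨c, hc, hcb⟩ := hcover (right_mem_hull _ _)
  have hnb : f^[n] b = p := by
    have hjn : j ≤ n := (Nat.le_succ j).trans (Nat.le_mul_of_pos_left _ (Nat.pos_of_ne_zero hi0))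
    rw [← Nat.sub_add_cancel hjn, iterate_add_apply, hj, iterate_fixed hp]
  have hcp : c ≠ p := by
    rintro rfl
    exact hbp (hcb.symm.trans (iterate_fixed hp n))
  obtain ⟨d, hd, hdp, hdc⟩ := T.exists_mem_hull_ne_ne hcp
  have hdb : d ∈ hull p b := T.hull_subset_hull_left hc hd
  obtain ⟨m, hm⟩ := h d hdb hdp
  refine .of_subset_image ⟨p, left_mem_hull p b⟩ (T.isClosed_hull p d) (T.isClosed_hull c b)
    (T.disjoint_hull_hull hd hc hdc) (T.hull_subset_hull_left hdb)
    (T.hull_subset_hull hc (right_mem_hull _ _)) (T.hull_subset_image_iterate_of_mem hf hp hm)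
    (n := n) ?_
  simpa only [hcb, hnb, hull_comm b p] using T.hull_subset_image_iterate hf n c b

/-- The orbit of `A` comes back close to `p` and beyond `c` at the same time, hence across two
disjoint arcs in `hull p c`, each of which is mapped across `A`. -/
theorem hasHorseshoe_of_returns [T2Space X] (T : TreeLike X) (hf : Continuous f) (hp : f p = p)
    (h : IsExpanding f p b) {A : Set X} (hA : IsClosed A) (hAc : IsPreconnected A) (hpA : p ∉ A)
    {j : ℕ} (hAj : A ⊆ f^[j] '' hull p b) (hc : c ∈ hull p b) (hcp : c ≠ p)
    (hret : ∀ U ∈ 𝓝 p, ∃ q, (f^[q] '' A ∩ U).Nonempty ∧ ∃ y ∈ f^[q] '' A, c ∈ hull p y) :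
    HasHorseshoe f := by
  obtain ⟨m, d₁, hd₁c, hd₁p, hcov₁⟩ := h.exists_hull_covers T hf hp hA hpA hAj hc hcp
  obtain ⟨d₂, hd₂d₁, hd₂p, hd₂₁⟩ := T.exists_mem_hull_ne_ne hd₁p
  have hd₂c : d₂ ∈ hull p c := T.hull_subset_hull_left hd₁c hd₂d₁
  obtain ⟨n, d₃, hd₃d₂, hd₃p, hcov₂⟩ :=
    h.exists_hull_covers T hf hp hA hpA hAj (T.hull_subset_hull_left hc hd₂c) hd₂p
  have hd₃d₁ : d₃ ∈ hull p d₁ := T.hull_subset_hull_left hd₂d₁ hd₃d₂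
  have hd₃c : d₃ ∈ hull p c := T.hull_subset_hull_left hd₁c hd₃d₁
  obtain ⟨S, hV, hVsub⟩ := T.exists_star_subset
    ((T.isClosed_hull d₃ c).isOpen_compl.mem_nhds (T.left_notMem_hull hd₃c hd₃p))
  obtain ⟨q, ⟨x, hxA, hxV⟩, y, hyA, hcy⟩ := hret _ hV
  have hcover : hull d₃ c ⊆ f^[q] '' A :=
    T.hull_subset_of_isPreconnected (T.isPreconnected_star p S)
      (hAc.image _ (hf.iterate q).continuousOn) (mem_of_mem_nhds hV) hxV hxA hyA hcy hd₃c
      (subset_compl_iff_disjoint_left.1 hVsub)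
  have hd₂₃ : hull d₃ d₂ ⊆ hull p d₂ := T.hull_subset_hull hd₃d₂ (right_mem_hull _ _)
  refine .of_subset_image_of_subset_image hf hA (Nonempty.of_image ⟨x, hxA⟩)
    (T.isClosed_hull d₁ c) (T.isClosed_hull d₃ d₂)
    ((T.disjoint_hull_hull hd₂d₁ hd₁c hd₂₁).symm.mono_right hd₂₃) hcov₁ hcov₂
    (Subset.trans ?_ hcover) (Subset.trans ?_ hcover)
  · exact T.hull_subset_hull (T.mem_hull_of_mem_hull_of_mem_hull hd₃d₁ hd₁c) (right_mem_hull _ _)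
  · exact T.hull_subset_hull_left (T.mem_hull_of_mem_hull_of_mem_hull hd₃d₂ hd₂c)

end IsExpanding

end Expanding

section HittingTimes

variable {X : Type*} {f : X → X}

/-- The set `N(U, V)` of times at which some point of `U` visits `V`. -/
def hittingTimes (f : X → X) (U V : Set X) : Set ℕ :=
  {k | (U ∩ f^[k] ⁻¹' V).Nonempty}

lemma hittingTimes_preimage_subset {g : X → X} (h : Function.Commute f g)
    (U V : Set X) :
    hittingTimes f (g ⁻¹' U) (g ⁻¹' V) ⊆ hittingTimes f U V := by
  rintro k ⟨x, hxU, hxV⟩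
  exact ⟨g x, hxU, by rwa [mem_preimage, (h.iterate_left k).eq]⟩

/-- Points arbitrarily close to `x` have iterates arbitrarily close to `y`. -/
def Reaches [TopologicalSpace X] (f : X → X) (x y : X) : Prop :=
  ∀ U ∈ 𝓝 x, ∀ V ∈ 𝓝 y, (hittingTimes f U V).Nonempty

lemma Reaches.mem_closure [TopologicalSpace X] {x y : X} (h : Reaches f x y) {U : Set X}
    (hU : U ∈ 𝓝 x) : y ∈ closure (⋃ k, f^[k] '' U) := by
  refine mem_closure_iff_nhds.2 fun V hV => ?_
  obtain ⟨k, z, hzU, hzV⟩ := h U hU V hV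
  exact ⟨f^[k] z, hzV, mem_iUnion.2 ⟨k, mem_image_of_mem _ hzU⟩⟩

end HittingTimes

lemma exists_rel_self_of_finite {α : Type*} [Finite α] [Nonempty α] (r : α → α → Prop)
    [IsTrans α r] (h : ∀ s, ∃ t, r s t) : ∃ t, r t t := by
  by_contra! hirr
  have : IsTrans α (swap r) := ⟨fun _ _ _ hab hbc => IsTrans.trans (r := r) _ _ _ hbc hab⟩
  have : Std.Irrefl (swap r) := ⟨hirr⟩
  obtain ⟨m, -, hm⟩ :=
    (Finite.wellFounded_of_trans_of_irrefl (swap r)).has_min univ univ_nonempty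
  exact (h m).elim fun t ht => hm t trivial ht

lemma exists_lt_and_not_succ {P : ℕ → Prop} (h0 : P 0) {n : ℕ} (hn : ¬ P n) :
    ∃ k < n, P k ∧ ¬ P (k + 1) := by
  induction n with
  | zero => exact absurd h0 hn
  | succ n ih =>
    by_cases h : P n
    · exact ⟨n, n.lt_succ_self, h, hn⟩
    · exact (ih h).imp fun k hk => ⟨hk.1.trans n.lt_succ_self, hk.2⟩

section UnstableBranch

variable {X : Type*} [TopologicalSpace X] {f : X → X} {a b c p s t w : X}

namespace TreeLike

lemma exists_mem_hull_mem_hull (T : TreeLike X) (ha : a ∈ hull p c) (hb : b ∈ hull p c)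
    (hap : a ≠ p) (hbp : b ≠ p) : ∃ d ≠ p, d ∈ hull p a ∧ d ∈ hull p b := by
  rcases T.hull_total ha hb with h | h
  · exact ⟨a, hap, right_mem_hull _ _, h⟩
  · exact ⟨b, hbp, h, right_mem_hull _ _⟩

lemma exists_forall_mem_hull (T : TreeLike X) (hsp : s ≠ p) {F : Set X} (hF : F.Finite)
    {e : X → X} (he : ∀ t ∈ F, e t ∈ hull p s) (hep : ∀ t ∈ F, e t ≠ p) :
    ∃ c ∈ hull p s, c ≠ p ∧ ∀ t ∈ F, c ∈ hull p (e t) := by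
  induction F, hF using Set.Finite.induction_on with
  | empty => exact ⟨s, right_mem_hull _ _, hsp, fun t ht => ht.elim⟩
  | @insert t F _ _ ih =>
    rw [forall_mem_insert] at he hep
    obtain ⟨c, hc, hcp, hcF⟩ := ih he.2 hep.2
    obtain ⟨d, hdp, hdc, hdt⟩ := T.exists_mem_hull_mem_hull hc he.1 hcp hep.1
    exact ⟨d, T.hull_subset_hull_left hc hdc, hdp, forall_mem_insert.2
      ⟨hdt, fun u hu => T.hull_subset_hull_left (hcF u hu) hdc⟩⟩

end TreeLike

/-- For a fixed point `p`, the branch of the unstable set of `p` that starts along the arc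
`hull p b`. -/
def unstableBranch (f : X → X) (p b : X) : Set X := ⋃ j, f^[j] '' hull p b

lemma iterate_mem_unstableBranch {x : X} (hx : x ∈ hull p b) (j : ℕ) :
    f^[j] x ∈ unstableBranch f p b :=
  mem_iUnion.2 ⟨j, mem_image_of_mem _ hx⟩

lemma unstableBranch_mono (T : TreeLike X) (ha : a ∈ hull p b) :
    unstableBranch f p a ⊆ unstableBranch f p b :=
  iUnion_mono fun _ => image_mono (T.hull_subset_hull_left ha)

/-- The orbits of all initial subarcs of `hull p s`, however short, accumulate at `w`. -/
def Accumulates (f : X → X) (p s w : X) : Prop :=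
  ∀ a ∈ hull p s, a ≠ p → w ∈ closure (unstableBranch f p a)

/-- Some initial subarc of `hull p t` is covered by iterates of all initial subarcs of
`hull p s`. -/
def Covers (f : X → X) (p s t : X) : Prop :=
  ∃ b ∈ hull p t, b ≠ p ∧ ∀ a ∈ hull p s, a ≠ p → ∃ i, b ∈ f^[i] '' hull p a

lemma Covers.trans (T : TreeLike X) (hf : Continuous f) (hp : f p = p) {u : X}
    (h : Covers f p s t) (h' : Covers f p t u) : Covers f p s u := by
  obtain ⟨b, hb, hbp, hsb⟩ := h
  obtain ⟨c, hc, hcp, htc⟩ := h'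
  refine ⟨c, hc, hcp, fun a ha hap => ?_⟩
  obtain ⟨i, hi⟩ := hsb a ha hap
  obtain ⟨j, hj⟩ := htc b hb hbp
  exact ⟨j + i, iterate_add f j i ▸ image_comp f^[j] f^[i] _ ▸
    image_mono (T.hull_subset_image_iterate_of_mem hf hp hi) hj⟩

lemma exists_accumulates_of_mem_closure [T2Space X] (T : TreeLike X) (hwp : w ≠ p) (ht : t ≠ p) :
    ∃ a ∈ hull p t, a ≠ p ∧ w ∉ hull p a ∧
      (w ∈ closure (unstableBranch f p a) → Accumulates f p t w) := by
  obtain ⟨a₀, ha₀, ha₀p, hacc⟩ : ∃ a ∈ hull p t, a ≠ p ∧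
      (w ∈ closure (unstableBranch f p a) → Accumulates f p t w) := by
    by_cases h : Accumulates f p t w
    · exact ⟨t, right_mem_hull _ _, ht, fun _ => h⟩
    · simp only [Accumulates, not_forall] at h
      obtain ⟨a, ha, hap, hw⟩ := h
      exact ⟨a, ha, hap, fun h => absurd h hw⟩
  obtain ⟨a, ha, hap, hsub⟩ := T.exists_mem_hull_subset ha₀p (isOpen_ne.mem_nhds hwp.symm)
  exact ⟨a, T.hull_subset_hull_left ha₀ ha, hap, fun hw => hsub hw rfl,
    fun hw => hacc (closure_mono (unstableBranch_mono T ha) hw)⟩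

lemma exists_covered_of_notMem_star (T : TreeLike X) (hf : Continuous f) (hp : f p = p)
    {S : Finset X} {a b : X → X} (hba : ∀ t ∈ S, b t ∈ hull p (a t))
    (hfb : ∀ t ∈ S, MapsTo f (hull p (b t)) (⋃ s ∈ S, hull p (a s)))
    (hc : hull p c ⊆ ⋃ t ∈ S, hull p (b t)) {x : X} (hx : x ∈ hull p c) {i : ℕ}
    (hi : f^[i] x ∉ ⋃ t ∈ S, hull p (a t)) :
    ∃ t ∈ S, (∃ k, b t ∈ f^[k] '' hull p c) ∧ f^[i] x ∈ unstableBranch f p (a t) := by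
  have hib : f^[i] x ∉ ⋃ t ∈ S, hull p (b t) :=
    fun h => hi (iUnion₂_mono (fun t ht => T.hull_subset_hull_left (hba t ht)) h)
  obtain ⟨k, hki, hk, hk'⟩ :=
    exists_lt_and_not_succ (P := fun k => f^[k] x ∈ ⋃ t ∈ S, hull p (b t)) (hc hx) hib
  obtain ⟨s, hs, hks⟩ := mem_iUnion₂.1 hk
  obtain ⟨t, ht, hkt⟩ := mem_iUnion₂.1 (hfb s hs hks)
  rw [← iterate_succ_apply' f k x] at hkt
  have hbt : b t ∈ hull p (f^[k + 1] x) :=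
    (T.hull_total hkt (hba t ht)).resolve_left fun h => hk' (mem_iUnion₂.2 ⟨t, ht, h⟩)
  refine ⟨t, ht, ⟨k + 1, T.hull_subset_image_iterate_of_mem hf hp ⟨x, hx, rfl⟩ hbt⟩, ?_⟩
  rw [← Nat.sub_add_cancel hki, iterate_add_apply]
  exact iterate_mem_unstableBranch hkt _

lemma exists_accumulates_covers [T2Space X] (T : TreeLike X) (hf : Continuous f) (hp : f p = p)
    (hwp : w ≠ p) {S : Finset X} (hpS : p ∉ S) (hS : (⋃ s ∈ S, hull p s) ∈ 𝓝 p) (hsS : s ∈ S)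
    (hs : Accumulates f p s w) : ∃ t ∈ S, Accumulates f p t w ∧ Covers f p s t := by
  have hSp : ∀ t ∈ S, t ≠ p := fun t ht => ne_of_mem_of_not_mem ht hpS
  have : Nonempty X := ⟨p⟩
  choose! a ha hap hwa hacc using fun t (ht : t ∈ S) =>
    exists_accumulates_of_mem_closure (f := f) T hwp (hSp t ht)
  have hstar : f ⁻¹' (⋃ t ∈ S, hull p (a t)) ∈ 𝓝 p :=
    hf.continuousAt.preimage_mem_nhds (hp.symm ▸ T.iUnion_hull_mem_nhds hS ha hap)
  choose! b hba hbp hfb using fun t (ht : t ∈ S) => T.exists_mem_hull_subset (hap t ht) hstar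
  by_contra! hcon
  simp only [Covers, not_exists, not_and, not_forall] at hcon
  choose! e he hep hnot using fun t (ht : t ∈ {t ∈ (S : Set X) | Accumulates f p t w}) =>
    hcon t ht.1 ht.2 (b t) (T.hull_subset_hull_left (ha t ht.1) (hba t ht.1)) (hbp t ht.1)
  obtain ⟨c₀, hc₀, hc₀p, hc₀e⟩ :=
    T.exists_forall_mem_hull (hSp s hsS) (S.finite_toSet.sep _) he hep
  obtain ⟨c, hcp, hcc₀, hcb⟩ := T.exists_mem_hull_mem_hull hc₀
    (T.hull_subset_hull_left (ha s hsS) (hba s hsS)) hc₀p (hbp s hsS)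
  have hclosed : IsClosed (⋃ t ∈ S, hull p (a t)) :=
    S.finite_toSet.isClosed_biUnion fun t _ => T.isClosed_hull p (a t)
  have hsub : unstableBranch f p c ⊆ (⋃ t ∈ S, hull p (a t)) ∪
      ⋃ t ∈ {t ∈ (S : Set X) | ∃ k, b t ∈ f^[k] '' hull p c}, unstableBranch f p (a t) := by
    refine iUnion_subset fun i => ?_
    rintro _ ⟨x, hx, rfl⟩
    refine or_iff_not_imp_left.2 fun hi => ?_
    obtain ⟨t, ht, hk, hi⟩ := exists_covered_of_notMem_star T hf hp hba hfb
      (fun _ hz => mem_iUnion₂.2 ⟨s, hsS, T.hull_subset_hull_left hcb hz⟩) hx hi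
    exact mem_iUnion₂.2 ⟨t, ⟨ht, hk⟩, hi⟩
  have hw := closure_mono hsub (hs c (T.hull_subset_hull_left hc₀ hcc₀) hcp)
  rw [closure_union, hclosed.closure_eq, (S.finite_toSet.sep _).closure_biUnion] at hw
  rcases hw with hw | hw
  · obtain ⟨t, ht, hwt⟩ := mem_iUnion₂.1 hw
    exact hwa t ht hwt
  · obtain ⟨t, ⟨ht, k, hk⟩, hwt⟩ := mem_iUnion₂.1 hw
    have htF : t ∈ {t ∈ (S : Set X) | Accumulates f p t w} := ⟨ht, hacc t ht hwt⟩
    exact hnot t htF k (image_mono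
      (T.hull_subset_hull_left (T.hull_subset_hull_left (hc₀e t htF) hcc₀)) hk)

lemma Reaches.exists_accumulates [T2Space X] (T : TreeLike X) (h : Reaches f p w) (hwp : w ≠ p)
    {S : Finset X} (hpS : p ∉ S) (hS : (⋃ s ∈ S, hull p s) ∈ 𝓝 p) :
    ∃ s ∈ S, Accumulates f p s w := by
  have : Nonempty X := ⟨p⟩
  choose! a ha hap _ hacc using fun t (ht : t ∈ S) =>
    exists_accumulates_of_mem_closure (f := f) T hwp (ne_of_mem_of_not_mem ht hpS)
  have hw := h.mem_closure (T.iUnion_hull_mem_nhds hS ha hap)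
  simp only [image_iUnion] at hw
  rw [iUnion_comm, funext fun s => iUnion_comm _, S.closure_biUnion] at hw
  obtain ⟨s, hs, hws⟩ := mem_iUnion₂.1 hw
  exact ⟨s, hs, hacc s hs hws⟩

/-- Among the finitely many directions at `p`, the relation `Covers` has no dead end on those
accumulating at `w`, so some direction covers itself. -/
theorem Reaches.exists_isExpanding [T2Space X] (T : TreeLike X) (hf : Continuous f) (hp : f p = p)
    (h : Reaches f p w) (hwp : w ≠ p) :
    ∃ b ≠ p, IsExpanding f p b ∧ w ∈ closure (unstableBranch f p b) := by
  obtain ⟨S, hpS, hS⟩ := T.exists_star p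
  obtain ⟨s, hsS, hs⟩ := h.exists_accumulates T hwp hpS hS
  let D := {t // t ∈ S ∧ Accumulates f p t w}
  have : Nonempty D := ⟨⟨s, hsS, hs⟩⟩
  have : Finite D := S.finite_toSet.subset fun t ht => ht.1
  have : IsTrans D fun s t => Covers f p s t := ⟨fun _ _ _ hst htu => hst.trans T hf hp htu⟩
  obtain ⟨t, b, hb, hbp, hcov⟩ : ∃ t : D, Covers f p t t :=
    exists_rel_self_of_finite (fun s t : D => Covers f p s t) fun s =>
      let ⟨t, htS, ht, hst⟩ := exists_accumulates_covers T hf hp hwp hpS hS s.2.1 s.2.2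
      ⟨⟨t, htS, ht⟩, hst⟩
  exact ⟨b, hbp, fun a ha hap => hcov a (T.hull_subset_hull_left hb ha) hap, t.2.2 b hb hbp⟩

end UnstableBranch

section ClosureDiff

variable {X : Type*} [TopologicalSpace X] {f : X → X} {C : Set X}

lemma TreeLike.finite_closure_diff (T : TreeLike X) (hC : IsPreconnected C) :
    (closure C \ C).Finite :=
  (T.finite_frontier C hC).subset (sdiff_subset_sdiff_right interior_subset)

variable [CompactSpace X] [T2Space X]

lemma image_closure_diff (hf : Continuous f) (hC : f '' C = C) (hfin : (closure C \ C).Finite) :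
    f '' (closure C \ C) = closure C \ C := by
  have hcl : f '' closure C = closure C := by
    rw [image_closure_of_isCompact isClosed_closure.isCompact hf.continuousOn, hC]
  have hsub : closure C \ C ⊆ f '' (closure C \ C) := by
    intro z hz
    obtain ⟨y, hy, rfl⟩ := hcl.symm ▸ hz.1
    exact ⟨y, ⟨hy, fun hyC => hz.2 (hC ▸ mem_image_of_mem f hyC)⟩, rfl⟩
  exact (eq_of_subset_of_ncard_le hsub (ncard_image_le hfin) (hfin.image _)).symm

lemma injOn_closure_diff (hf : Continuous f) (hC : f '' C = C) (hfin : (closure C \ C).Finite) :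
    InjOn f (closure C \ C) :=
  injOn_of_ncard_image_eq (by rw [image_closure_diff hf hC hfin]) hfin

lemma eq_of_iterate_eq_of_mem_closure_diff {w : X} (hf : Continuous f) (hC : f '' C = C)
    (hfin : (closure C \ C).Finite) (hw : w ∈ closure C \ C) (hfw : f w = w) {n : ℕ} {z : X}
    (hz : z ∈ closure C) (hzw : f^[n] z = w) : z = w := by
  have hmaps : MapsTo f (closure C) (closure C) :=
    (mapsTo_iff_image_subset.2 hC.subset).closure hf
  induction n generalizing z with
  | zero => exact hzw
  | succ n ih =>
    have hfz : f z = w := ih (hmaps hz) hzw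
    have hzC : z ∉ C := fun hzC => hw.2 (hfz ▸ hC ▸ mem_image_of_mem f hzC)
    exact injOn_closure_diff hf hC hfin ⟨hz, hzC⟩ hw (hfz.trans hfw.symm)

end ClosureDiff

section ExpandingGerm

variable {X : Type*} [TopologicalSpace X] {f : X → X} {a b p w z : X} {n : ℕ}

namespace IsExpanding

lemma of_mem_hull (T : TreeLike X) (hf : Continuous f) (hp : f p = p) (h : IsExpanding f p b)
    (hz : z ∈ hull p b) : IsExpanding f p z := by
  intro a ha hap
  obtain ⟨i, hi⟩ := h a (T.hull_subset_hull_left hz ha) hap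
  exact ⟨i, T.hull_subset_image_iterate_of_mem hf hp hi hz⟩

lemma iterate (T : TreeLike X) (hf : Continuous f) (hp : f p = p) (h : IsExpanding f p b)
    (hn : n ≠ 0) : IsExpanding f^[n] p b := by
  intro a ha hap
  obtain ⟨i, hi⟩ := h a ha hap
  refine ⟨i, ?_⟩
  rw [← iterate_mul, mul_comm, iterate_mul]
  exact subset_image_iterate (T.hull_subset_hull_left ha)
    (T.hull_subset_image_iterate_of_mem hf hp hi) hn (right_mem_hull _ _)

lemma iterate_ne [T2Space X] (T : TreeLike X) (hf : Continuous f) (hp : f p = p)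
    (h : IsExpanding f p b) (hHS : ¬ HasHorseshoe f) (hz : z ∈ hull p b) (hzp : z ≠ p) (j : ℕ) :
    f^[j] z ≠ p :=
  fun hj => hHS ((h.of_mem_hull T hf hp hz).hasHorseshoe_of_iterate_eq T hf hp hzp hj)

end IsExpanding

lemma hull_subset_unstableBranch : hull p b ⊆ unstableBranch f p b :=
  fun _ hx => iterate_mem_unstableBranch hx 0

lemma mapsTo_unstableBranch (f : X → X) (p b : X) :
    MapsTo f (unstableBranch f p b) (unstableBranch f p b) := by
  intro x hx
  obtain ⟨j, z, hz, rfl⟩ := mem_iUnion.1 hx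
  exact iterate_succ_apply' f j z ▸ iterate_mem_unstableBranch hz (j + 1)

lemma isPreconnected_unstableBranch (T : TreeLike X) (hf : Continuous f) (hp : f p = p) :
    IsPreconnected (unstableBranch f p b) :=
  isPreconnected_iUnion ⟨p, mem_iInter.2 fun j => ⟨p, left_mem_hull _ _, iterate_fixed hp j⟩⟩
    fun j => (T.isPreconnected_hull p b).image _ (hf.iterate j).continuousOn

lemma mem_unstableBranch_of_mem_hull (T : TreeLike X) (hf : Continuous f) (hp : f p = p)
    (hw : w ∈ closure (unstableBranch f p b)) {x : X} (hx : x ∈ hull p w) (hxw : x ≠ w) :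
    x ∈ unstableBranch f p b := by
  have hconn : IsPreconnected (insert w (unstableBranch f p b)) :=
    (isPreconnected_unstableBranch T hf hp).subset_closure (subset_insert _ _)
      (insert_subset hw subset_closure)
  exact (hull_subset hconn (Or.inr (hull_subset_unstableBranch (left_mem_hull _ _))) (Or.inl rfl)
    hx).resolve_left hxw

lemma image_unstableBranch (T : TreeLike X) (hf : Continuous f) (hp : f p = p) (hn : n ≠ 0)
    (hb : b ∈ f^[n] '' hull p b) : f '' unstableBranch f p b = unstableBranch f p b := by
  refine (mapsTo_unstableBranch f p b).image_subset.antisymm fun x hx => ?_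
  obtain ⟨j, z, hz, rfl⟩ := mem_iUnion.1 hx
  obtain ⟨y, hy, rfl⟩ := T.hull_subset_image_iterate_of_mem hf hp hb hz
  obtain ⟨k, rfl⟩ := Nat.exists_eq_succ_of_ne_zero hn
  refine ⟨f^[j + k] y, iterate_mem_unstableBranch hy _, ?_⟩
  rw [← iterate_succ_apply' f (j + k), ← iterate_add_apply, Nat.add_succ]

lemma unstableBranch_subset_iUnion (f : X → X) (p b : X) (hn : n ≠ 0) :
    unstableBranch f p b ⊆ ⋃ r ∈ Finset.range n, f^[r] '' unstableBranch f^[n] p b := by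
  intro x hx
  obtain ⟨i, z, hz, rfl⟩ := mem_iUnion.1 hx
  refine mem_iUnion₂.2 ⟨i % n, Finset.mem_range.2 (Nat.mod_lt i (Nat.pos_of_ne_zero hn)),
    (f^[n])^[i / n] z, iterate_mem_unstableBranch hz _, ?_⟩
  rw [← iterate_mul, ← iterate_add_apply, Nat.mod_add_div]

lemma exists_iterate_mem_closure_unstableBranch (T : TreeLike X) (hf : Continuous f) (hp : f p = p)
    (hn : n ≠ 0) (hb : b ∈ f^[n] '' hull p b) (hw : w ∈ closure (unstableBranch f p b)) :
    ∃ m, f^[m] w ∈ closure (unstableBranch f^[n] p b) := by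
  have hw' := closure_mono (unstableBranch_subset_iUnion f p b hn) hw
  rw [Finset.closure_biUnion] at hw'
  obtain ⟨r, hr, hwr⟩ := mem_iUnion₂.1 hw'
  have hrn := (Finset.mem_range.1 hr).le
  refine ⟨n - r, ?_⟩
  have hmem := image_closure_subset_closure_image (hf.iterate (n - r)) (mem_image_of_mem _ hwr)
  rwa [← image_comp, ← iterate_add, Nat.sub_add_cancel hrn, image_unstableBranch T (hf.iterate n)
    (iterate_fixed hp n) one_ne_zero (by simpa using hb)] at hmem

/-- `f` pushes the arc `hull p b` away from its fixed point `p`: it covers itself, each of its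
subarcs starting at `p` is eventually stretched over it, and no other point of it ever returns to
`p`. -/
structure IsExpandingGerm (f : X → X) (p b : X) : Prop where
  map_eq : f p = p
  ne : b ≠ p
  mem_image : b ∈ f '' hull p b
  isExpanding : IsExpanding f p b
  iterate_ne : ∀ z ∈ hull p b, z ≠ p → ∀ j, f^[j] z ≠ p

namespace IsExpandingGerm

lemma image_unstableBranch (T : TreeLike X) (hf : Continuous f) (g : IsExpandingGerm f p b) :
    f '' unstableBranch f p b = unstableBranch f p b :=
  _root_.image_unstableBranch T hf g.map_eq one_ne_zero (by simpa using g.mem_image)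

lemma monotone_image (T : TreeLike X) (hf : Continuous f) (g : IsExpandingGerm f p b) :
    Monotone fun j => f^[j] '' hull p b := by
  refine monotone_nat_of_le_succ fun j => ?_
  rw [iterate_succ, image_comp]
  exact image_mono (T.hull_subset_image_iterate_of_mem (n := 1) hf g.map_eq g.mem_image)

lemma mem_image_iterate (T : TreeLike X) (hf : Continuous f) (g : IsExpandingGerm f p b) (j : ℕ) :
    b ∈ f^[j] '' hull p b :=
  g.monotone_image T hf (Nat.zero_le j) ⟨b, right_mem_hull _ _, rfl⟩

lemma exists_mem_image_hull (T : TreeLike X) (hf : Continuous f) (g : IsExpandingGerm f p b)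
    (ha : a ∈ hull p b) (hap : a ≠ p) (hz : z ∈ unstableBranch f p b) :
    ∃ n, z ∈ f^[n] '' hull p a := by
  obtain ⟨j, hj⟩ := mem_iUnion.1 hz
  obtain ⟨i, hi⟩ := g.isExpanding a ha hap
  refine ⟨j + i, ?_⟩
  rw [iterate_add, image_comp]
  exact image_mono (T.hull_subset_image_iterate_of_mem hf g.map_eq hi) hj

lemma isPreconnected_unstableBranch_diff (T : TreeLike X) (hf : Continuous f)
    (g : IsExpandingGerm f p b) : IsPreconnected (unstableBranch f p b \ {p}) := by
  have hdiff : unstableBranch f p b \ {p} = ⋃ j, f^[j] '' (hull p b \ {p}) := by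
    refine Subset.antisymm ?_ (iUnion_subset fun j => ?_)
    · rintro x ⟨hx, hxp⟩
      obtain ⟨j, z, hz, rfl⟩ := mem_iUnion.1 hx
      exact mem_iUnion.2 ⟨j, z, ⟨hz, fun hzp => hxp (hzp ▸ iterate_fixed g.map_eq j)⟩, rfl⟩
    · rintro _ ⟨z, hz, rfl⟩
      exact ⟨iterate_mem_unstableBranch hz.1 j, g.iterate_ne z hz.1 hz.2 j⟩
  rw [hdiff]
  refine isPreconnected_iUnion ⟨b, mem_iInter.2 fun j => ?_⟩
    fun j => (T.isPreconnected_hull_diff g.ne).image _ (hf.iterate j).continuousOn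
  obtain ⟨z, hz, hzb⟩ := g.mem_image_iterate T hf j
  exact ⟨z, ⟨hz, fun hzp => g.ne (hzb ▸ hzp ▸ iterate_fixed g.map_eq j)⟩, hzb⟩

lemma iterate (T : TreeLike X) (hf : Continuous f) (g : IsExpandingGerm f p b) (hn : n ≠ 0) :
    IsExpandingGerm f^[n] p b where
  map_eq := iterate_fixed g.map_eq n
  ne := g.ne
  mem_image := g.mem_image_iterate T hf n
  isExpanding := g.isExpanding.iterate T hf g.map_eq hn
  iterate_ne z hz hzp j := by
    rw [← iterate_mul]
    exact g.iterate_ne z hz hzp _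

lemma unstableBranch_iterate (T : TreeLike X) (hf : Continuous f) (g : IsExpandingGerm f p b)
    (hn : n ≠ 0) : unstableBranch f^[n] p b = unstableBranch f p b := by
  refine Subset.antisymm (iUnion_subset fun j => ?_) (iUnion_subset fun j => ?_)
  · rw [← iterate_mul]
    exact subset_iUnion (fun j => f^[j] '' hull p b) _
  · refine Subset.trans ?_ (subset_iUnion (fun j => (f^[n])^[j] '' hull p b) j)
    rw [← iterate_mul]
    exact g.monotone_image T hf (Nat.le_mul_of_pos_left _ (Nat.pos_of_ne_zero hn))

end IsExpandingGerm

/-- The finite set `closure C \ C`, where `C` is the unstable branch, is mapped to itself, and the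
orbits inside `C` start on `hull p b`. -/
lemma IsExpanding.iterate_ne_of_mem_closure [CompactSpace X] [T2Space X] (T : TreeLike X)
    (hf : Continuous f) (hp : f p = p) (h : IsExpanding f p b) (hbp : b ≠ p)
    (hHS : ¬ HasHorseshoe f) (hw : w ∈ closure (unstableBranch f p b)) (hwp : w ≠ p) (n : ℕ) :
    f^[n] w ≠ p := by
  by_cases hwC : w ∈ unstableBranch f p b
  · obtain ⟨i, z, hz, rfl⟩ := mem_iUnion.1 hwC
    rw [← iterate_add_apply]
    exact h.iterate_ne T hf hp hHS hz (fun hzp => hwp (hzp ▸ iterate_fixed hp i)) _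
  · obtain ⟨i, hi, hb⟩ := h.exists_pos_mem_image T hbp
    have hmaps : MapsTo f (closure (unstableBranch f p b) \ unstableBranch f p b) _ :=
      mapsTo_iff_image_subset.2 (image_closure_diff hf (image_unstableBranch T hf hp hi hb)
        (T.finite_closure_diff (isPreconnected_unstableBranch T hf hp))).subset
    have hwn := hmaps.iterate n ⟨hw, hwC⟩
    intro hn
    rw [hn] at hwn
    exact hwn.2 (hull_subset_unstableBranch (left_mem_hull p b))

theorem Reaches.exists_isExpandingGerm [CompactSpace X] [T2Space X] (T : TreeLike X)
    (hf : Continuous f) (hHS : ¬ HasHorseshoe f) (hp : f p = p) (h : Reaches f p w) (hwp : w ≠ p) :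
    (∃ i ≠ 0, ∃ b, IsExpandingGerm f^[i] p b ∧
      ∃ m, f^[m] w ∈ closure (unstableBranch f^[i] p b)) ∧ ∀ n, f^[n] w ≠ p := by
  obtain ⟨b, hbp, hb, hw⟩ := h.exists_isExpanding T hf hp hwp
  obtain ⟨i, hi, hbi⟩ := hb.exists_pos_mem_image T hbp
  refine ⟨⟨i, hi, b, ⟨iterate_fixed hp i, hbp, hbi, hb.iterate T hf hp hi, ?_⟩,
    exists_iterate_mem_closure_unstableBranch T hf hp hi hbi hw⟩,
    hb.iterate_ne_of_mem_closure T hf hp hbp hHS hw hwp⟩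
  intro z hz hzp j
  rw [← iterate_mul]
  exact hb.iterate_ne T hf hp hHS hz hzp _

end ExpandingGerm

section UniquePreimage

variable {X : Type*} [TopologicalSpace X] [CompactSpace X] [T2Space X] {f : X → X} {K N : Set X}
  {w : X}

/-- Follow an orbit from outside `N` to a point extremely close to `w`, and start at its last exit
time: a late exit would make `w` an iterate of a point of `K` outside `interior N`. -/
lemma exists_forall_le_iterate_mem (hf : Continuous f) (hK : IsClosed K) (hfK : MapsTo f K K)
    (hN : N ∈ 𝓝 w) (hpre : ∀ z ∈ K, ∀ n, f^[n] z = w → z = w)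
    (happ : ∀ W ∈ 𝓝 w, ∃ z ∈ K, z ∉ N ∧ ∃ n, f^[n] z ∈ W) (j : ℕ) :
    ∃ x ∈ f '' (K \ interior N), ∀ i ≤ j, f^[i] x ∈ N := by
  classical
  have hclosed : IsClosed (⋃ i ∈ Finset.range (j + 2), f^[i] '' (K \ interior N)) :=
    (Finset.range (j + 2)).finite_toSet.isClosed_biUnion fun i _ =>
      ((hK.sdiff isOpen_interior).isCompact.image (hf.iterate i)).isClosed
  have hw : w ∉ ⋃ i ∈ Finset.range (j + 2), f^[i] '' (K \ interior N) := by
    intro hw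
    obtain ⟨i, -, z, hz, hzw⟩ := mem_iUnion₂.1 hw
    exact hz.2 (hpre z hz.1 i hzw ▸ mem_interior_iff_mem_nhds.2 hN)
  obtain ⟨z, hzK, hzN, n, hn⟩ := happ _ (hclosed.isOpen_compl.mem_nhds hw)
  let P : ℕ → Prop := fun k => f^[k] z ∉ interior N
  have hP0 : P 0 := fun h => hzN (interior_subset h)
  set τ := Nat.findGreatest P n
  have hτn : τ ≤ n := Nat.findGreatest_le n
  have hτK : f^[τ] z ∈ K \ interior N :=
    ⟨hfK.iterate τ hzK, Nat.findGreatest_spec (Nat.zero_le n) hP0⟩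
  have hj : j + 2 ≤ n - τ := by
    by_contra! hlt
    refine hn (mem_iUnion₂.2 ⟨n - τ, Finset.mem_range.2 hlt, f^[τ] z, hτK, ?_⟩)
    rw [← iterate_add_apply, Nat.sub_add_cancel hτn]
  refine ⟨f^[τ + 1] z, ⟨f^[τ] z, hτK, (iterate_succ_apply' f τ z).symm⟩, fun i hi => ?_⟩
  rw [← iterate_add_apply]
  exact interior_subset (not_not.1 (Nat.findGreatest_is_greatest (P := P) (n := n)
    (k := i + (τ + 1)) (by omega) (by omega)))

lemma exists_ne_forall_iterate_mem (hf : Continuous f) (hK : IsClosed K) (hfK : MapsTo f K K)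
    (hNc : IsClosed N) (hN : N ∈ 𝓝 w) (hpre : ∀ z ∈ K, ∀ n, f^[n] z = w → z = w)
    (happ : ∀ W ∈ 𝓝 w, ∃ z ∈ K, z ∉ N ∧ ∃ n, f^[n] z ∈ W) :
    ∃ x ∈ K, x ≠ w ∧ ∀ i, f^[i] x ∈ N := by
  have hclosed (j : ℕ) :
      IsClosed (f '' (K \ interior N) ∩ ⋂ i ≤ j, f^[i] ⁻¹' N) :=
    ((hK.sdiff isOpen_interior).isCompact.image hf).isClosed.inter
      (isClosed_biInter fun i _ => hNc.preimage (hf.iterate i))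
  obtain ⟨x, hx⟩ := IsCompact.nonempty_iInter_of_sequence_nonempty_isCompact_isClosed
    (fun j => f '' (K \ interior N) ∩ ⋂ i ≤ j, f^[i] ⁻¹' N)
    (fun j => inter_subset_inter_right _ <|
      biInter_subset_biInter_left fun i hi => Nat.le_succ_of_le hi)
    (fun j => (exists_forall_le_iterate_mem hf hK hfK hN hpre happ j).imp
      fun x hx => ⟨hx.1, mem_iInter₂.2 hx.2⟩)
    (hclosed 0).isCompact hclosed
  rw [mem_iInter] at hx
  obtain ⟨z, hz, rfl⟩ := (hx 0).1
  refine ⟨f z, hfK hz.1, fun hzw => hz.2 ?_, fun i => mem_iInter₂.1 (hx i).2 i le_rfl⟩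
  exact hpre z hz.1 1 hzw ▸ mem_interior_iff_mem_nhds.2 hN

end UniquePreimage

section Heteroclinic

variable {X : Type*} [TopologicalSpace X] [T2Space X] {f : X → X} {b b' c p w : X}

namespace IsExpandingGerm

lemma exists_mem_hull_mem_hull (T : TreeLike X) (hf : Continuous f) (g : IsExpandingGerm f p b)
    (hw : w ∈ closure (unstableBranch f p b)) (hwp : w ≠ p) :
    ∃ c ∈ hull p b, c ∈ hull p w ∧ c ≠ p ∧ c ≠ w := by
  have hw' : w ∈ closure (unstableBranch f p b \ {p}) :=
    isOpen_compl_singleton.closure_inter ⟨hw, hwp⟩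
  have hconn : IsPreconnected (insert w (unstableBranch f p b \ {p})) :=
    (g.isPreconnected_unstableBranch_diff T hf).subset_closure (subset_insert _ _)
      (insert_subset hw' subset_closure)
  obtain ⟨m, hmb, hmw, hbw⟩ := T.exists_median p b w
  have hmp : m ≠ p := by
    rintro rfl
    rcases hull_subset hconn (Or.inr ⟨hull_subset_unstableBranch (right_mem_hull _ _), g.ne⟩)
      (Or.inl rfl) hbw with h | h
    exacts [hwp h.symm, h.2 rfl]
  obtain ⟨c, hcm, hcp, hne⟩ := T.exists_mem_hull_ne_ne hmp
  refine ⟨c, T.hull_subset_hull_left hmb hcm, T.hull_subset_hull_left hmw hcm, hcp, ?_⟩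
  rintro rfl
  exact hne (T.hull_antisymm hcm hmw)

end IsExpandingGerm

/-- Otherwise a point of `hull p b` between `p` and `w` lands on `w`; it lies in the unstable
branch of `w`, so some other point of `hull w b'` returns to `w`. -/
lemma IsExpandingGerm.notMem_unstableBranch (T : TreeLike X) (hf : Continuous f)
    (g : IsExpandingGerm f p b) (g' : IsExpandingGerm f w b') (hpw : p ≠ w)
    (hw : w ∈ closure (unstableBranch f p b)) (hp : p ∈ closure (unstableBranch f w b')) :
    w ∉ unstableBranch f p b := by
  intro hwD
  obtain ⟨c, hcb, hcw, hcp, hne⟩ := g.exists_mem_hull_mem_hull T hf hw hpw.symm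
  obtain ⟨i, x, hxc, hxw⟩ := g.exists_mem_image_hull T hf hcb hcp hwD
  have hxp : x ≠ p := fun h => hpw (by rw [← hxw, h, iterate_fixed g.map_eq])
  have hxne : x ≠ w := fun h => hne (T.hull_antisymm hcw (h ▸ hxc))
  obtain ⟨j, z, hz, hzx⟩ := mem_iUnion.1 (mem_unstableBranch_of_mem_hull T hf g'.map_eq hp
    (hull_comm p w ▸ T.hull_subset_hull_left hcw hxc) hxp)
  have hzw : z ≠ w := fun h => hxne (by rw [← hzx, h, iterate_fixed g'.map_eq])
  exact g'.iterate_ne z hz hzw (i + j) (by rw [iterate_add_apply, hzx, hxw])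

lemma TreeLike.exists_isClosed_nhds_forall_mem_hull [RegularSpace X] (T : TreeLike X) {C : Set X}
    (hC : IsPreconnected C) (hpC : p ∈ C) (hwC : w ∉ C) (hc : c ∈ hull p w) (hcw : c ≠ w) :
    ∃ N ∈ 𝓝 w, IsClosed N ∧ Disjoint (hull p c) N ∧
      ∀ x ∈ N, x ∈ closure C → x ∈ hull p w ∧ c ∈ hull p x := by
  obtain ⟨N₀, hN₀, hN₀w⟩ := T.exists_nhds_mem_hull p w
  have hwc : w ∉ hull p c := fun h => hcw (T.hull_antisymm hc h)
  have hfin : ((closure C \ C) \ {w}).Finite := (T.finite_closure_diff hC).subset sdiff_subset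
  obtain ⟨N, hN, hNc, hNsub⟩ := exists_mem_nhds_isClosed_subset (inter_mem (inter_mem hN₀
    ((T.isClosed_hull p c).isOpen_compl.mem_nhds hwc))
    (hfin.isClosed.isOpen_compl.mem_nhds fun h => h.2 rfl))
  refine ⟨N, hN, hNc, disjoint_right.2 fun x hx => (hNsub hx).1.2, fun x hx hxC => ?_⟩
  have hxw : x ∈ hull p w := by
    by_cases hne : x = w
    · exact hne ▸ right_mem_hull p x
    · have hxC' : x ∈ C := by_contra fun h => (hNsub hx).2 ⟨⟨hxC, h⟩, hne⟩
      exact hN₀w x (hNsub hx).1.1 fun h => hwC (hull_subset hC hpC hxC' h)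
  exact ⟨hxw, (T.hull_total hc hxw).resolve_right (hNsub hx).1.2⟩

lemma IsExpandingGerm.exists_mem_diff_iterate_mem (T : TreeLike X) (hf : Continuous f)
    (g : IsExpandingGerm f w b) (hp : p ∈ closure (unstableBranch f w b)) (hpw : p ≠ w)
    {K M N U : Set X} (hfK : MapsTo f K K) (hK : ∀ x ∈ hull w p, x ≠ w → x ∈ K) (hM : M ∈ 𝓝 w)
    (hMN : M ⊆ N) (hfM : MapsTo f M N) (hN : IsClosed N) (hpN : p ∉ N) (hU : U ∈ 𝓝 p) :
    ∃ x ∈ K, x ∈ N \ M ∧ ∃ q, f^[q] x ∈ U := by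
  obtain ⟨c, hcb, hcp, hcw, -⟩ := g.exists_mem_hull_mem_hull T hf hp hpw
  obtain ⟨a, ha, haw, haM⟩ := T.exists_mem_hull_subset hcw hM
  obtain ⟨y, ⟨hyU, hyN⟩, hyD⟩ :=
    mem_closure_iff_nhds.1 hp _ (inter_mem hU (hN.isOpen_compl.mem_nhds hpN))
  obtain ⟨q, e, he, rfl⟩ :=
    g.exists_mem_image_hull T hf (T.hull_subset_hull_left hcb ha) haw hyD
  have hew : e ≠ w := by
    rintro rfl
    rw [iterate_fixed g.map_eq] at hyN
    exact hyN (hMN (mem_of_mem_nhds hM))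
  have heK : e ∈ K :=
    hK e (T.hull_subset_hull_left (T.hull_subset_hull_left hcp ha) he) hew
  obtain ⟨k, hkq, hk, hk'⟩ := exists_lt_and_not_succ (P := fun k => f^[k] e ∈ M) (haM he)
    (n := q) fun h => hyN (hMN h)
  refine ⟨f^[k + 1] e, hfK.iterate _ heK, ⟨?_, hk'⟩, q - (k + 1), ?_⟩
  · rw [iterate_succ_apply']
    exact hfM hk
  · rwa [← iterate_add_apply, Nat.sub_add_cancel hkq]

lemma IsExpandingGerm.exists_ne_forall_iterate_mem [CompactSpace X] (T : TreeLike X)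
    (hf : Continuous f) (g : IsExpandingGerm f p b)
    (hw : w ∈ closure (unstableBranch f p b) \ unstableBranch f p b) (hfw : f w = w)
    (hc : c ∈ hull p b) (hcp : c ≠ p) {N : Set X} (hN : N ∈ 𝓝 w) (hNc : IsClosed N)
    (hd : Disjoint (hull p c) N) :
    ∃ x ∈ closure (unstableBranch f p b), x ≠ w ∧ ∀ i, f^[i] x ∈ N := by
  refine _root_.exists_ne_forall_iterate_mem hf isClosed_closure
    ((mapsTo_unstableBranch f p b).closure hf) hNc hN
    (fun z hz n => eq_of_iterate_eq_of_mem_closure_diff hf (g.image_unstableBranch T hf)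
      (T.finite_closure_diff (isPreconnected_unstableBranch T hf g.map_eq)) hw hfw hz)
    fun W hW => ?_
  obtain ⟨y, hyW, hyD⟩ := mem_closure_iff_nhds.1 hw.1 W hW
  obtain ⟨n, z, hz, rfl⟩ := g.exists_mem_image_hull T hf hc hcp hyD
  exact ⟨z, subset_closure (hull_subset_unstableBranch (T.hull_subset_hull_left hc hz)),
    disjoint_left.1 hd hz, n, hyW⟩

/-- Two fixed points in the closure of each other's unstable branches. Near `w` the closure of the
branch of `p` is an arc ending at `w`; some orbit in it stays near `w` forever, others start near
`w` and escape to `p`. So the iterates of a fundamental piece `hull c v` of this arc return both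
close to `p` and beyond `c`. -/
theorem IsExpandingGerm.hasHorseshoe_of_mem_closure [CompactSpace X] (T : TreeLike X)
    (hf : Continuous f) (g : IsExpandingGerm f p b) (g' : IsExpandingGerm f w b') (hpw : p ≠ w)
    (hw : w ∈ closure (unstableBranch f p b)) (hp : p ∈ closure (unstableBranch f w b')) :
    HasHorseshoe f := by
  have hwD := g.notMem_unstableBranch T hf g' hpw hw hp
  have hDw : ∀ x ∈ hull p w, x ≠ w → x ∈ unstableBranch f p b :=
    fun x => mem_unstableBranch_of_mem_hull T hf g.map_eq hw
  have hfK := (mapsTo_unstableBranch f p b).closure hf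
  obtain ⟨c, hcb, hcw, hcp, hne⟩ := g.exists_mem_hull_mem_hull T hf hw hpw.symm
  obtain ⟨N, hN, hNc, hd, hNK⟩ := T.exists_isClosed_nhds_forall_mem_hull
    (isPreconnected_unstableBranch T hf g.map_eq) (hull_subset_unstableBranch (left_mem_hull p b))
    hwD hcw hne
  have hcN : c ∉ N := disjoint_left.1 hd (right_mem_hull p c)
  obtain ⟨x₀, hx₀K, hx₀w, hx₀N⟩ :=
    g.exists_ne_forall_iterate_mem T hf ⟨hw, hwD⟩ g'.map_eq hcb hcp hN hNc hd
  have hM : N ∩ f ⁻¹' N ∩ {x₀}ᶜ ∈ 𝓝 w := inter_mem (inter_mem hN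
    (hf.continuousAt.preimage_mem_nhds (by rwa [g'.map_eq]))) (isOpen_ne.mem_nhds hx₀w.symm)
  obtain ⟨v, hv, hvw, hcv, hcvM⟩ :=
    T.exists_mem_hull_forall_notMem hcw hpw hM fun h => hcN h.1.1
  have hA : ∀ x ∈ closure (unstableBranch f p b), x ∈ N \ (N ∩ f ⁻¹' N ∩ {x₀}ᶜ) → x ∈ hull c v :=
    fun x hx hxN => hcvM x (hNK x hxN.1 hx).1 (disjoint_right.1 hd hxN.1) hxN.2
  obtain ⟨J, hJ⟩ := mem_iUnion.1 (hDw v hv hvw)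
  refine g.isExpanding.hasHorseshoe_of_returns T hf g.map_eq (T.isClosed_hull c v)
    (T.isPreconnected_hull c v) (T.left_notMem_hull hcv hcp)
    ((T.hull_subset_hull hcv (right_mem_hull _ _)).trans
      (T.hull_subset_image_iterate_of_mem hf g.map_eq hJ)) hcb hcp fun U hU => ?_
  obtain ⟨x, hxK, hxN, q, hq⟩ := g'.exists_mem_diff_iterate_mem T hf hp hpw hfK
    (fun x hx hxw => subset_closure (hDw x (hull_comm w p ▸ hx) hxw)) hM
    (inter_subset_left.trans inter_subset_left) (fun x hx => hx.1.2) hNc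
    (disjoint_left.1 hd (left_mem_hull p c)) hU
  exact ⟨q, ⟨f^[q] x, mem_image_of_mem _ (hA x hxK hxN), hq⟩, f^[q] x₀,
    mem_image_of_mem _ (hA x₀ hx₀K ⟨hx₀N 0, fun h => h.2 rfl⟩),
    (hNK _ (hx₀N q) (hfK.iterate q hx₀K)).2⟩

end Heteroclinic

section Recurrence

variable {X : Type*} [TopologicalSpace X] {f g : X → X} {b p w : X}

lemma Reaches.map (hg : Continuous g) (hfg : Function.Commute f g) (h : Reaches f p w) :
    Reaches f (g p) (g w) := fun U hU V hV =>
  (h _ (hg.continuousAt.preimage_mem_nhds hU) _ (hg.continuousAt.preimage_mem_nhds hV)).mono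
    (hittingTimes_preimage_subset hfg U V)

/-- At suitable times `k`, arbitrarily small neighbourhoods of `w` meet both themselves and
arbitrarily small neighbourhoods of `p` under `f^[k]`. -/
def ReturnsAndReaches (f : X → X) (w p : X) : Prop :=
  ∀ A ∈ 𝓝 w, ∀ U ∈ 𝓝 p, (hittingTimes f A A ∩ hittingTimes f A U).Nonempty

lemma ReturnsAndReaches.reaches (h : ReturnsAndReaches f w p) : Reaches f w p :=
  fun A hA U hU => (h A hA U hU).mono inter_subset_right

lemma ReturnsAndReaches.map (hg : Continuous g) (hfg : Function.Commute f g)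
    (h : ReturnsAndReaches f w p) : ReturnsAndReaches f (g w) (g p) := fun A hA U hU =>
  (h _ (hg.continuousAt.preimage_mem_nhds hA) _ (hg.continuousAt.preimage_mem_nhds hU)).mono
    (inter_subset_inter (hittingTimes_preimage_subset hfg A A)
      (hittingTimes_preimage_subset hfg A U))

lemma IsExpandingGerm.exists_star_subset_image (T : TreeLike X) (hf : Continuous f)
    (g : IsExpandingGerm f p b) {S : Finset X}
    (hS : (⋃ s ∈ S, hull w s) ⊆ unstableBranch f p b) :
    ∃ j, (⋃ s ∈ S, hull w s) ⊆ f^[j] '' hull p b := by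
  have hmem : ∀ s ∈ S, ∃ j, w ∈ f^[j] '' hull p b ∧ s ∈ f^[j] '' hull p b := by
    intro s hs
    obtain ⟨i, hi⟩ := mem_iUnion.1 (hS (mem_iUnion₂.2 ⟨s, hs, left_mem_hull w s⟩))
    obtain ⟨j, hj⟩ := mem_iUnion.1 (hS (mem_iUnion₂.2 ⟨s, hs, right_mem_hull w s⟩))
    exact ⟨max i j, g.monotone_image T hf (le_max_left i j) hi,
      g.monotone_image T hf (le_max_right i j) hj⟩
  choose! J hwJ hsJ using hmem
  refine ⟨S.sup J, iUnion₂_subset fun s hs => ?_⟩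
  exact (hull_subset ((T.isPreconnected_hull p b).image _ (hf.iterate _).continuousOn) (hwJ s hs)
    (hsJ s hs)).trans (g.monotone_image T hf (Finset.le_sup hs))

variable [T2Space X]

theorem Reaches.hasHorseshoe [CompactSpace X] (T : TreeLike X) (hf : Continuous f) (hp : f p = p)
    (hw : f w = w) (hpw : p ≠ w) (h : Reaches f p w) (h' : Reaches f w p) : HasHorseshoe f := by
  by_contra hHS
  obtain ⟨⟨i, hi, b, gp, m, hwm⟩, -⟩ := h.exists_isExpandingGerm T hf hHS hp hpw.symm
  obtain ⟨⟨j, hj, c, gw, n, hpn⟩, -⟩ := h'.exists_isExpandingGerm T hf hHS hw hpw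
  rw [iterate_fixed hw, ← gp.unstableBranch_iterate T (hf.iterate i) hj, ← iterate_mul] at hwm
  rw [iterate_fixed hp, ← gw.unstableBranch_iterate T (hf.iterate j) hi, ← iterate_mul,
    mul_comm] at hpn
  have gp' := gp.iterate T (hf.iterate i) hj
  have gw' := gw.iterate T (hf.iterate j) hi
  rw [← iterate_mul] at gp' gw'
  rw [mul_comm] at gw'
  exact hHS (gp'.hasHorseshoe_of_mem_closure T (hf.iterate _) gw' hpw hwm hpn).of_iterate

theorem IsExpandingGerm.hasHorseshoe_of_mem_interior (T : TreeLike X) (hf : Continuous f)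
    (g : IsExpandingGerm f p b) (hw : w ∈ interior (unstableBranch f p b)) (hwp : w ≠ p)
    (h : ReturnsAndReaches f w p) : HasHorseshoe f := by
  obtain ⟨S, hS, hSsub⟩ := T.exists_star_subset (inter_mem (mem_interior_iff_mem_nhds.1 hw)
    (isOpen_ne.mem_nhds hwp))
  set A := ⋃ s ∈ S, hull w s
  have hAc : IsPreconnected A := T.isPreconnected_star w S
  have hAcl : IsClosed A := S.finite_toSet.isClosed_biUnion fun s _ => T.isClosed_hull w s
  have hpA : p ∉ A := fun hp => (hSsub hp).2 rfl
  obtain ⟨j, hj⟩ := g.exists_star_subset_image T hf (hSsub.trans inter_subset_left)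
  obtain ⟨c, hcb, hcw, hcp, -⟩ :=
    g.exists_mem_hull_mem_hull T hf (subset_closure (interior_subset hw)) hwp
  obtain ⟨d, hdc, hdp, hdA⟩ := T.exists_mem_hull_subset hcp (hAcl.isOpen_compl.mem_nhds hpA)
  have hd : ∀ v ∈ A, d ∈ hull p v := fun v hv =>
    (T.hull_subset_union p w v (T.hull_subset_hull_left hcw hdc)).resolve_right fun hdv =>
      hdA (right_mem_hull p d) (hull_subset hAc hv (mem_of_mem_nhds hS) hdv)
  refine g.isExpanding.hasHorseshoe_of_returns T hf g.map_eq hAcl hAc hpA hj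
    (T.hull_subset_hull_left hcb hdc) hdp fun U hU => ?_
  obtain ⟨k, ⟨x, hx, hxA⟩, y, hy, hyU⟩ := h A hS U hU
  exact ⟨k, ⟨f^[k] y, mem_image_of_mem _ hy, hyU⟩, f^[k] x, mem_image_of_mem _ hx, hd _ hxA⟩

/-- The closure of an unstable branch at `p` contains a forward orbit of `w`. Either this orbit
stays in the finite frontier of the branch, so that `w` is eventually periodic, or it enters the
interior. -/
theorem hasHorseshoe_of_reaches_of_returnsAndReaches [CompactSpace X] (T : TreeLike X)
    (hf : Continuous f) (hp : f p = p) (hwp : w ≠ p) (hpw : ∀ n ≠ 0, Reaches f^[n] p w)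
    (hret : ∀ n ≠ 0, ReturnsAndReaches f^[n] w p) : HasHorseshoe f := by
  by_contra hHS
  obtain ⟨⟨i, hi, b, g, m, hm⟩, hne⟩ :=
    (hpw 1 one_ne_zero).exists_isExpandingGerm T hf hHS hp hwp
  have hfi := hf.iterate i
  have hcomm (n m : ℕ) : Function.Commute f^[n] f^[m] :=
    (Function.Commute.refl f).iterate_iterate n m
  by_cases hfr : ∀ j, (f^[i])^[j] (f^[m] w) ∈ frontier (unstableBranch f^[i] p b)
  · obtain ⟨j, k, hjk, heq⟩ := Set.Finite.exists_lt_map_eq_of_forall_mem hfr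
      (T.finite_frontier _ (isPreconnected_unstableBranch T hfi g.map_eq))
    set M := i * j + m
    set P := i * (k - j)
    have hP : P ≠ 0 := mul_ne_zero hi (Nat.sub_pos_of_lt hjk).ne'
    have hfix : f^[P] (f^[M] w) = f^[M] w := by
      rw [← iterate_mul, ← iterate_mul, ← iterate_add_apply, ← iterate_add_apply] at heq
      rw [← iterate_add_apply, heq, ← add_assoc, ← mul_add, Nat.sub_add_cancel hjk.le]
    have hM := hf.iterate M
    have hpw' := (hpw P hP).map hM (hcomm P M)
    have hwp' := (hret P hP).reaches.map hM (hcomm P M)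
    rw [iterate_fixed hp] at hpw' hwp'
    exact hHS (hpw'.hasHorseshoe T (hf.iterate P) (iterate_fixed hp P) hfix (hne M).symm
      hwp').of_iterate
  · push Not at hfr
    obtain ⟨j, hj⟩ := hfr
    have hint : f^[i * j + m] w ∈ interior (unstableBranch f^[i] p b) := by
      rw [← closure_sdiff_frontier, iterate_add_apply, iterate_mul]
      exact ⟨((mapsTo_unstableBranch f^[i] p b).closure hfi).iterate j hm, hj⟩
    have hret' := (hret i hi).map (hf.iterate (i * j + m)) (hcomm i _)
    rw [iterate_fixed hp] at hret'
    exact hHS (g.hasHorseshoe_of_mem_interior T hfi hint (hne _) hret').of_iterate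

end Recurrence

section OmegaLimit

variable {X : Type*} [TopologicalSpace X] {f : X → X} {p q x : X}

lemma mapsTo_omegaLimitSet (hf : Continuous f) :
    MapsTo f (omegaLimitSet f x) (omegaLimitSet f x) := by
  intro q hq
  refine mem_iInter.2 fun n => map_mem_closure hf (mem_iInter.1 hq n) ?_
  rintro _ ⟨k, hk, rfl⟩
  exact ⟨k + 1, Nat.le_succ_of_le hk, iterate_succ_apply' f k x⟩

lemma exists_iterate_mem_of_mem_omegaLimitSet (hq : q ∈ omegaLimitSet f x) {U : Set X}
    (hU : U ∈ 𝓝 q) (n : ℕ) : ∃ k ≥ n, f^[k] x ∈ U := by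
  obtain ⟨_, hkU, k, hk, rfl⟩ := mem_closure_iff_nhds.1 (mem_iInter.1 hq n) U hU
  exact ⟨k, hk, hkU⟩

variable [CompactSpace X]

lemma exists_forall_iterate_mem_of_omegaLimitSet_subset {O : Set X} (hO : IsOpen O)
    (h : omegaLimitSet f x ⊆ O) : ∃ n, ∀ k ≥ n, f^[k] x ∈ O := by
  have hanti : Antitone fun n : ℕ => closure ((fun k => f^[k] x) '' Ici n) :=
    fun _ _ hmn => closure_mono (image_mono (Ici_subset_Ici.2 hmn))
  obtain ⟨n, hn⟩ := exists_subset_nhds_of_compactSpace hanti.directed_ge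
    (fun _ => isClosed_closure) fun q hq => hO.mem_nhds (h hq)
  exact ⟨n, fun k hk => hn (subset_closure ⟨k, hk, rfl⟩)⟩

lemma omegaLimitSet_nonempty : (omegaLimitSet f x).Nonempty := by
  by_contra h
  obtain ⟨n, hn⟩ := exists_forall_iterate_mem_of_omegaLimitSet_subset (f := f) (x := x)
    isOpen_empty (not_nonempty_iff_eq_empty.1 h).subset
  exact hn n le_rfl

lemma exists_periodic_mem_omegaLimitSet (hf : Continuous f) (h : (omegaLimitSet f x).Finite) :
    ∃ p ∈ omegaLimitSet f x, ∃ N ≠ 0, f^[N] p = p := by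
  obtain ⟨q, hq⟩ := omegaLimitSet_nonempty (f := f) (x := x)
  obtain ⟨i, j, hij, heq⟩ :=
    h.exists_lt_map_eq_of_forall_mem fun n => (mapsTo_omegaLimitSet hf).iterate n hq
  refine ⟨f^[i] q, (mapsTo_omegaLimitSet hf).iterate i hq, j - i, (Nat.sub_pos_of_lt hij).ne', ?_⟩
  rw [← iterate_add_apply, Nat.sub_add_cancel hij.le, heq]

variable [T2Space X]

/-- Near the finite `ω`-limit set the orbit cannot leave the part close to `p` along `f^[N]`. -/
lemma exists_tendsto_iterate_of_mem_omegaLimitSet (hf : Continuous f)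
    (h : (omegaLimitSet f x).Finite) (hp : p ∈ omegaLimitSet f x) {N : ℕ} (hN : N ≠ 0)
    (hNp : f^[N] p = p) : ∃ n, Tendsto (fun k => f^[N * k + n] x) atTop (𝓝 p) := by
  obtain ⟨U, O, hU, hO, hpU, hΩO, hd⟩ : SeparatedNhds {p} (omegaLimitSet f x \ {p}) :=
    .of_isCompact_isCompact isCompact_singleton (h.subset sdiff_subset).isCompact
      disjoint_sdiff_self_right
  rw [singleton_subset_iff] at hpU
  have hevent : ∀ V, IsOpen V → p ∈ V → ∃ n, ∀ k ≥ n, f^[k] x ∈ U → f^[k] x ∈ V := by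
    intro V hV hpV
    obtain ⟨n, hn⟩ := exists_forall_iterate_mem_of_omegaLimitSet_subset (f := f)
      (x := x) (hV.union hO) fun q hq =>
        (eq_or_ne q p).imp (by rintro rfl; exact hpV) fun h => hΩO ⟨hq, h⟩
    exact ⟨n, fun k hk hkU => (hn k hk).resolve_right (disjoint_left.1 hd hkU)⟩
  obtain ⟨n₀, hn₀⟩ := hevent (f^[N] ⁻¹' U) (hU.preimage (hf.iterate N))
    (by rwa [mem_preimage, hNp])
  obtain ⟨n, hn, hnU⟩ := exists_iterate_mem_of_mem_omegaLimitSet hp (hU.mem_nhds hpU) n₀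
  have hstay : ∀ k, f^[N * k + n] x ∈ U := by
    intro k
    induction k with
    | zero => simpa using hnU
    | succ k ih =>
      rw [mul_add_one, add_comm (N * k), add_assoc, iterate_add_apply]
      exact hn₀ _ (by omega) ih
  refine ⟨n, tendsto_nhds.2 fun V hV hpV => ?_⟩
  obtain ⟨m, hm⟩ := hevent V hV hpV
  filter_upwards [eventually_ge_atTop m] with k hk
  exact hm _ (hk.trans ((Nat.le_mul_of_pos_left k (Nat.pos_of_ne_zero hN)).trans
    (Nat.le_add_right _ _))) (hstay k)

theorem exists_tendsto_iterate_of_finite_omegaLimitSet (hf : Continuous f)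
    (h : (omegaLimitSet f x).Finite) :
    ∃ N ≠ 0, ∃ p, f^[N] p = p ∧ Tendsto (fun k => f^[N * k] x) atTop (𝓝 p) := by
  obtain ⟨p, hp, N, hN, hNp⟩ := exists_periodic_mem_omegaLimitSet hf h
  obtain ⟨n, hn⟩ := exists_tendsto_iterate_of_mem_omegaLimitSet hf h hp hN hNp
  refine ⟨N, hN, f^[N * n - n] p, ?_, (tendsto_add_atTop_iff_nat n).1 ?_⟩
  · rw [((Function.Commute.refl f).iterate_iterate _ _).eq, hNp]
  · refine (((hf.iterate (N * n - n)).tendsto p).comp hn).congr fun k => ?_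
    have hle : n ≤ N * n := Nat.le_mul_of_pos_left n (Nat.pos_of_ne_zero hN)
    rw [comp_apply, ← iterate_add_apply, mul_add]
    congr 1
    omega

end OmegaLimit

section Independence

variable {X : Type*} [TopologicalSpace X] {f : X → X} {p x y : X}

/-- Two elements of a large independence set are congruent modulo `n * (K + 1)`; their difference
is the required time. -/
lemma INPair.exists_hittingTimes (h : INPair f x y) {U V : Set X} (hU : U ∈ 𝓝 x) (hV : V ∈ 𝓝 y)
    {n : ℕ} (hn : n ≠ 0) (K : ℕ) : ∃ k ≥ K, ∀ s t : Bool,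
      k ∈ hittingTimes f^[n] (if s then U else V) (if t then U else V) := by
  obtain ⟨I, hI, hind⟩ := h U hU V hV (n * (K + 1) + 1)
  have hpos : 0 < n * (K + 1) := Nat.mul_pos (Nat.pos_of_ne_zero hn) K.succ_pos
  obtain ⟨i, hi, j, hj, hij, hmod⟩ : ∃ i ∈ I, ∃ j ∈ I, i < j ∧ i ≡ j [MOD n * (K + 1)] := by
    obtain ⟨i, hi, j, hj, hne, hmod⟩ := Finset.exists_ne_map_eq_of_card_lt_of_maps_to
      (s := I) (t := Finset.range (n * (K + 1))) (by rw [Finset.card_range]; omega)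
      (fun a _ => Finset.mem_coe.2 (Finset.mem_range.2 (Nat.mod_lt a hpos)))
    rcases hne.lt_or_gt with hij | hij
    · exact ⟨i, hi, j, hj, hij, hmod⟩
    · exact ⟨j, hj, i, hi, hij, hmod.symm⟩
  obtain ⟨c, hc⟩ : n * (K + 1) ∣ j - i := (Nat.modEq_iff_dvd' hij.le).1 hmod
  have hc0 : 0 < c := Nat.pos_of_mul_pos_left (hc ▸ Nat.sub_pos_of_lt hij)
  refine ⟨(K + 1) * c, K.le_succ.trans (Nat.le_mul_of_pos_right _ hc0), fun s t => ?_⟩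
  obtain ⟨z, hz⟩ := hind {i, j} (Finset.insert_subset hi (Finset.singleton_subset_iff.2 hj))
    (Finset.insert_nonempty _ _) fun n => if n = i then s else t
  simp only [Finset.mem_insert, Finset.mem_singleton, iInter_iInter_eq_or_left, if_true,
    iInter_iInter_eq_left, if_neg hij.ne', mem_inter_iff, mem_preimage] at hz
  refine ⟨f^[i] z, hz.1, ?_⟩
  rw [mem_preimage, ← iterate_mul, ← mul_assoc, ← hc, ← iterate_add_apply,
    Nat.sub_add_cancel hij.le]
  exact hz.2

lemma INPair.reaches (h : INPair f x y) {n : ℕ} (hn : n ≠ 0) : Reaches f^[n] x y :=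
  fun _ hU _ hV => (h.exists_hittingTimes hU hV hn 0).imp fun _ hk => hk.2 true false

lemma INPair.returnsAndReaches (h : INPair f x y) {n : ℕ} (hn : n ≠ 0) :
    ReturnsAndReaches f^[n] y x := fun _ hV _ hU =>
  (h.exists_hittingTimes hU hV hn 0).imp fun _ hk => ⟨hk.2 false false, hk.2 false true⟩

lemma INPair.reaches_of_tendsto (h : INPair f x y) (hf : Continuous f) {n : ℕ} (hn : n ≠ 0)
    (hlim : Tendsto (fun k => f^[n * k] x) atTop (𝓝 p)) : Reaches f^[n] p x := by
  intro U hU V hV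
  obtain ⟨m, hm⟩ := (hlim.eventually (eventually_mem_nhds_iff.2 hU)).exists
  have hA : f^[n * m] ⁻¹' U ∩ V ∈ 𝓝 x :=
    inter_mem ((hf.iterate _).continuousAt.preimage_mem_nhds hm) hV
  obtain ⟨k, hmk, hk⟩ := h.exists_hittingTimes hA univ_mem hn m
  obtain ⟨u, hu, huk⟩ := hk true true
  refine ⟨k - m, f^[n * m] u, hu.1, ?_⟩
  rw [mem_preimage, iterate_mul, ← iterate_add_apply, Nat.sub_add_cancel hmk]
  exact huk.2

lemma INPair.returnsAndReaches_of_tendsto (h : INPair f x y) {n : ℕ} (hn : n ≠ 0)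
    (hlim : Tendsto (fun k => f^[n * k] x) atTop (𝓝 p)) : ReturnsAndReaches f^[n] x p := by
  intro A hA U hU
  obtain ⟨m, hm⟩ := (hlim.eventually hU).exists_forall_of_atTop
  obtain ⟨k, hmk, hk⟩ := h.exists_hittingTimes hA univ_mem hn m
  refine ⟨k, hk true true, x, mem_of_mem_nhds hA, ?_⟩
  rw [mem_preimage, ← iterate_mul]
  exact hm k hmk

theorem INPair.hasHorseshoe [CompactSpace X] [T2Space X] (h : INPair f x y) (T : TreeLike X)
    (hf : Continuous f) (hne : x ≠ y) (hfin : (omegaLimitSet f x).Finite) : HasHorseshoe f := by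
  obtain ⟨N, hN, p, hp, hlim⟩ := exists_tendsto_iterate_of_finite_omegaLimitSet hf hfin
  refine HasHorseshoe.of_iterate (k := N) ?_
  by_cases hxp : x = p
  · subst hxp
    refine hasHorseshoe_of_reaches_of_returnsAndReaches T (hf.iterate N) hp hne.symm
      (fun n hn => ?_) fun n hn => ?_ <;> rw [← iterate_mul]
    · exact h.reaches (mul_ne_zero hN hn)
    · exact h.returnsAndReaches (mul_ne_zero hN hn)
  · have hlim' (n : ℕ) (hn : n ≠ 0) : Tendsto (fun k => f^[N * n * k] x) atTop (𝓝 p) := by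
      simpa only [mul_assoc, comp_def, id] using
        hlim.comp (tendsto_id.const_mul_atTop' (Nat.pos_of_ne_zero hn))
    refine hasHorseshoe_of_reaches_of_returnsAndReaches T (hf.iterate N) hp hxp
      (fun n hn => ?_) fun n hn => ?_ <;> rw [← iterate_mul]
    · exact h.reaches_of_tendsto hf (mul_ne_zero hN hn) (hlim' n hn)
    · exact h.returnsAndReaches_of_tendsto (mul_ne_zero hN hn) (hlim' n hn)

end Independence

section Entropy

variable {X : Type*} {f : X → X}

lemma exists_forall_iterate_mem {ι : Type*} {S : ι → Set X} (hne : ∀ s, (S s).Nonempty)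
    (h : ∀ s t, S s ⊆ f '' S t) (N : ℕ) (ω : ℕ → ι) : ∃ x, ∀ j ≤ N, f^[j] x ∈ S (ω j) := by
  induction N generalizing ω with
  | zero =>
    obtain ⟨x, hx⟩ := hne (ω 0)
    exact ⟨x, fun j hj => by rwa [Nat.le_zero.1 hj]⟩
  | succ N ih =>
    obtain ⟨y, hy⟩ := ih fun n => ω (n + 1)
    obtain ⟨x, hx, hxy⟩ := h (ω 1) (ω 0) (hy 0 N.zero_le)
    refine ⟨x, fun j hj => ?_⟩
    cases j with
    | zero => exact hx
    | succ j =>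
      rw [iterate_succ_apply, hxy]
      exact hy j (Nat.le_of_succ_le_succ hj)

lemma exists_seqCoverCountOn_cover {𝒰 : Finset (Set X)} (h : ⋃₀ (𝒰 : Set (Set X)) = univ)
    (Y : Set X) (a : ℕ → ℕ) (n : ℕ) :
    ∃ c : Fin (seqCoverCountOn f Y a 𝒰 n) → Fin n → Set X, (∀ j i, c j i ∈ 𝒰) ∧
      Y ⊆ ⋃ j, ⋂ i, f^[a i.1] ⁻¹' c j i := by
  suffices hne : {m | ∃ c : Fin m → Fin n → Set X, (∀ j i, c j i ∈ 𝒰) ∧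
      Y ⊆ ⋃ j, ⋂ i, f^[a i.1] ⁻¹' c j i}.Nonempty by
    unfold seqCoverCountOn
    exact Nat.sInf_mem hne
  classical
  let e := Fintype.equivFin (Fin n → 𝒰)
  refine ⟨Fintype.card (Fin n → 𝒰), fun j i => (e.symm j i).1, fun j i => (e.symm j i).2,
    fun x _ => ?_⟩
  have hx (i : Fin n) : ∃ U : 𝒰, f^[a i.1] x ∈ U.1 := by
    obtain ⟨U, hU, hxU⟩ := h.symm.subset (mem_univ (f^[a i.1] x))
    exact ⟨⟨U, hU⟩, hxU⟩
  choose U hU using hx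
  refine mem_iUnion.2 ⟨e U, mem_iInter.2 fun i => ?_⟩
  simp only [mem_preimage, e.symm_apply_apply]
  exact hU i

/-- Points following distinct itineraries through `S false` and `S true` cannot lie in the same
element of the join cover. -/
lemma two_pow_le_seqCoverCountOn {S : Bool → Set X} (hne : ∀ s, (S s).Nonempty) {n : ℕ}
    (hn : n ≠ 0) (hS : ∀ s t, S s ⊆ f^[n] '' S t) {𝒰 : Finset (Set X)}
    (hcov : ⋃₀ (𝒰 : Set (Set X)) = univ) (h𝒰 : ∀ U ∈ 𝒰, ∃ s, Disjoint (S s) U) (N : ℕ) :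
    2 ^ N ≤ seqCoverCountOn f univ id 𝒰 (n * N) := by
  obtain ⟨c, hc, hcov⟩ := exists_seqCoverCountOn_cover (f := f) hcov univ id (n * N)
  have hitinerary (ω : Fin N → Bool) : ∃ x, ∀ i : Fin N, f^[n * i] x ∈ S (ω i) := by
    obtain ⟨x, hx⟩ := exists_forall_iterate_mem hne hS N
      fun j => if h : j < N then ω ⟨j, h⟩ else true
    refine ⟨x, fun i => ?_⟩
    simpa only [iterate_mul, i.2, dif_pos] using hx i i.2.le
  choose x hx using hitinerary
  choose J hJ using fun ω => mem_iUnion.1 (hcov (mem_univ (x ω)))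
  have hJinj : Injective J := by
    intro ω ω' heq
    by_contra hne
    obtain ⟨i, hi⟩ := ne_iff.1 hne
    let i' : Fin (n * N) := ⟨n * i, Nat.mul_lt_mul_of_pos_left i.2 (Nat.pos_of_ne_zero hn)⟩
    obtain ⟨s, hs⟩ := h𝒰 _ (hc (J ω) i')
    have hω : s ≠ ω i := fun h => disjoint_left.1 hs (h ▸ hx ω i) (mem_iInter.1 (hJ ω) i')
    have hω' : s ≠ ω' i := fun h =>
      disjoint_left.1 hs (h ▸ hx ω' i) (heq ▸ mem_iInter.1 (hJ ω') i')
    exact hi (Bool.not_inj ((Bool.eq_not_of_ne hω).symm.trans (Bool.eq_not_of_ne hω')))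
  simpa only [Fintype.card_pi, Fintype.card_bool, Finset.prod_const, Finset.card_univ,
    Fintype.card_fin] using Fintype.card_le_of_injective J hJinj

lemma log_two_div_le_topEntropy [TopologicalSpace X] {𝒰 : Finset (Set X)}
    (h𝒰 : IsOpenCoverOn univ 𝒰) {n : ℕ} (hn : n ≠ 0)
    (hcount : ∀ N, 2 ^ N ≤ seqCoverCountOn f univ id 𝒰 (n * N)) :
    ENNReal.ofReal (Real.log 2 / n) ≤ topEntropy f := by
  refine le_trans ?_ (le_iSup₂_of_le (f := fun 𝒰 _ => limsup (fun k : ℕ => ENNReal.ofReal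
    (Real.log (seqCoverCountOn f univ id 𝒰 k) / k)) atTop) 𝒰 h𝒰 le_rfl)
  refine le_limsup_of_frequently_le (frequently_atTop.2 fun N => ?_)
  have hnN : N + 1 ≤ n * (N + 1) := Nat.le_mul_of_pos_left _ (Nat.pos_of_ne_zero hn)
  refine ⟨n * (N + 1), N.le_succ.trans hnN, ENNReal.ofReal_le_ofReal ?_⟩
  calc Real.log 2 / n = Real.log (2 ^ (N + 1)) / (n * (N + 1) : ℕ) := by
        rw [Real.log_pow]
        push_cast
        field_simp
    _ ≤ _ := by
        gcongr
        exact_mod_cast hcount (N + 1)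

theorem HasHorseshoe.topEntropy_ne_zero [TopologicalSpace X] (h : HasHorseshoe f) :
    topEntropy f ≠ 0 := by
  classical
  obtain ⟨S₁, S₂, n, h₁, h₂, hd, hne, hc₁, hc₂⟩ := h
  have hne₂ : S₂.Nonempty := (hne.mono (subset_union_left.trans hc₂)).of_image
  have hn : n ≠ 0 := by
    rintro rfl
    obtain ⟨x, hx⟩ := hne
    exact disjoint_left.1 hd hx (by simpa using hc₂ (Or.inl hx))
  have hcov : ⋃₀ (({S₁ᶜ, S₂ᶜ} : Finset (Set X)) : Set (Set X)) = univ := by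
    rw [Finset.coe_pair, sUnion_pair, ← compl_inter, hd.inter_eq, compl_empty]
  have hopen : IsOpenCoverOn univ {S₁ᶜ, S₂ᶜ} :=
    ⟨by simp [h₁.isOpen_compl, h₂.isOpen_compl], hcov.ge⟩
  have hcount := two_pow_le_seqCoverCountOn (f := f) (S := fun s => if s then S₁ else S₂)
    (by simp [hne, hne₂]) hn (by simp_all [union_subset_iff]) hcov
    (by simp [disjoint_compl_right])
  refine (lt_of_lt_of_le ?_ (log_two_div_le_topEntropy hopen hn hcount)).ne'
  exact ENNReal.ofReal_pos.2 (div_pos (Real.log_pos one_lt_two) (by positivity))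

end Entropy

section ArcParam

variable {X : Type*} [TopologicalSpace X] {γ : ℝ → X} {A : Set X}

/-- `γ`, restricted to `[0,1]`, is an injective parametrization of the arc `A`. -/
structure IsArcParam (γ : ℝ → X) (A : Set X) : Prop where
  continuousOn : ContinuousOn γ (Icc 0 1)
  injOn : InjOn γ (Icc 0 1)
  image_eq : γ '' Icc 0 1 = A

lemma IsArc.exists_isArcParam (hA : IsArc A) : ∃ γ, IsArcParam γ A := by
  obtain ⟨φ⟩ := hA
  let γ : ℝ → X := IccExtend zero_le_one fun t => (φ.symm t : X)
  have hγ : (Icc (0 : ℝ) 1).domRestrict γ = fun t => (φ.symm t : X) :=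
    funext fun t => IccExtend_val zero_le_one _ t
  refine ⟨γ, continuousOn_iff_continuous_domRestrict.2 ?_, injOn_iff_injective.2 ?_, ?_⟩
  · exact hγ ▸ continuous_subtype_val.comp φ.symm.continuous
  · exact hγ ▸ Subtype.val_injective.comp φ.symm.injective
  · rw [← range_domRestrict, hγ, range_comp' Subtype.val, φ.symm.surjective.range_eq, image_univ,
      Subtype.range_coe]

namespace IsArcParam

lemma mem (g : IsArcParam γ A) {t : ℝ} (ht : t ∈ Icc (0 : ℝ) 1) : γ t ∈ A :=
  g.image_eq ▸ mem_image_of_mem γ ht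

lemma isPreconnected (g : IsArcParam γ A) : IsPreconnected A :=
  g.image_eq ▸ isPreconnected_Icc.image _ g.continuousOn

section T2

variable [T2Space X]

lemma isClosed (g : IsArcParam γ A) : IsClosed A :=
  g.image_eq ▸ (isCompact_Icc.image_of_continuousOn g.continuousOn).isClosed

lemma isEmbedding (g : IsArcParam γ A) : IsEmbedding ((Icc (0 : ℝ) 1).domRestrict γ) :=
  ((continuousOn_iff_continuous_domRestrict.1 g.continuousOn).isClosedEmbedding
    (injOn_iff_injective.1 g.injOn)).isEmbedding

lemma ordConnected_preimage (g : IsArcParam γ A) {S : Set X} (hSA : S ⊆ A)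
    (hS : IsPreconnected S) : OrdConnected (Icc 0 1 ∩ γ ⁻¹' S) := by
  have hrange : S ⊆ range ((Icc (0 : ℝ) 1).domRestrict γ) := by
    rwa [range_domRestrict, g.image_eq]
  rw [← image_preimage_eq_of_subset hrange, g.isEmbedding.isInducing.isPreconnected_image] at hS
  rw [← Subtype.image_preimage_coe]
  exact (hS.image _ continuous_subtype_val.continuousOn).ordConnected

lemma eq_of_isArcEndpoint (g : IsArcParam γ A) {p : X} (hp : IsArcEndpoint A p) :
    p = γ 0 ∨ p = γ 1 := by
  obtain ⟨hpA, hc⟩ := hp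
  obtain ⟨t, ht, rfl⟩ := g.image_eq.ge hpA
  by_contra! hcon
  have h0 : (0 : ℝ) ∈ Icc (0 : ℝ) 1 := left_mem_Icc.2 zero_le_one
  have h1 : (1 : ℝ) ∈ Icc (0 : ℝ) 1 := right_mem_Icc.2 zero_le_one
  exact ((g.ordConnected_preimage sdiff_subset hc.isPreconnected).out
    ⟨h0, g.mem h0, hcon.1.symm⟩ ⟨h1, g.mem h1, hcon.2.symm⟩ ht).2.2 rfl

lemma map_nhdsWithin (g : IsArcParam γ A) {t : ℝ} (ht : t ∈ Icc (0 : ℝ) 1) (hA : A ∈ 𝓝 (γ t)) :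
    map γ (𝓝[Icc 0 1] t) = 𝓝 (γ t) := by
  rw [nhdsWithin_eq_map_subtype_coe ht, map_map]
  exact g.isEmbedding.map_nhds_of_mem ⟨t, ht⟩ (by rwa [range_domRestrict, g.image_eq])

lemma uniquelyArcConnected (g : IsArcParam γ A) : UniquelyArcConnected A := by
  intro a ha b hb hab
  obtain ⟨s, hs, rfl⟩ := g.image_eq.ge ha
  obtain ⟨t, ht, rfl⟩ := g.image_eq.ge hb
  have hst : s ≠ t := fun h => hab (congrArg γ h)
  have himage : AffineMap.lineMap s t '' Icc (0 : ℝ) 1 = uIcc s t := by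
    rw [← segment_eq_image_lineMap, segment_eq_uIcc]
  have huIcc : uIcc s t ⊆ Icc 0 1 := uIcc_subset_Icc hs ht
  have hmaps : MapsTo (AffineMap.lineMap s t) (Icc (0 : ℝ) 1) (Icc 0 1) :=
    mapsTo_iff_image_subset.2 (himage.trans_subset huIcc)
  refine ⟨γ ∘ AffineMap.lineMap s t, ?_, ?_, by simp, by simp, ?_, fun S hSA hS hsS htS => ?_⟩
  · exact g.continuousOn.comp AffineMap.lineMap_continuous.continuousOn hmaps
  · exact g.injOn.comp (AffineMap.lineMap_injective ℝ hst).injOn hmaps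
  · rw [image_comp, himage, ← g.image_eq]
    exact image_mono huIcc
  · rw [image_comp, himage, image_subset_iff]
    exact ((g.ordConnected_preimage hSA hS).uIcc_subset ⟨hs, hsS⟩ ⟨ht, htS⟩).trans
      inter_subset_right

end T2

end IsArcParam

end ArcParam

section Concat

variable {X : Type*} {γ δ : ℝ → X}

/-- The concatenation of two curves parametrized by `[0,1]`. -/
noncomputable def concat (γ δ : ℝ → X) (t : ℝ) : X :=
  if t ≤ 1 / 2 then γ (2 * t) else δ (2 * t - 1)

lemma concat_of_le {t : ℝ} (h : t ≤ 1 / 2) : concat γ δ t = γ (2 * t) := if_pos h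

lemma concat_of_ge (hγδ : γ 1 = δ 0) {t : ℝ} (h : 1 / 2 ≤ t) : concat γ δ t = δ (2 * t - 1) := by
  rcases h.eq_or_lt with rfl | h
  · simp [concat, hγδ]
  · exact if_neg h.not_ge

lemma concat_zero : concat γ δ 0 = γ 0 := by simp [concat]

lemma concat_one : concat γ δ 1 = δ 1 := by norm_num [concat]

lemma image_concat_subset (hγδ : γ 1 = δ 0) :
    concat γ δ '' Icc 0 1 ⊆ γ '' Icc 0 1 ∪ δ '' Icc 0 1 := by
  rintro _ ⟨t, ht, rfl⟩
  rcases le_total t (1 / 2) with h | h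
  · rw [concat_of_le h]
    exact Or.inl ⟨_, ⟨by linarith [ht.1], by linarith⟩, rfl⟩
  · rw [concat_of_ge hγδ h]
    exact Or.inr ⟨_, ⟨by linarith, by linarith [ht.2]⟩, rfl⟩

/-- The set `T` is `[0,1]` for arcs and `[0,1)` for closed curves. -/
lemma injOn_concat {T : Set ℝ} (hT : T ⊆ Icc 0 1) (hT' : ∀ t ∈ T, 1 / 2 ≤ t → 2 * t - 1 ∈ T)
    (hγδ : γ 1 = δ 0) (hγ : InjOn γ (Icc 0 1)) (hδ : InjOn δ (Icc 0 1))
    (hmeet : ∀ s ∈ Icc (0 : ℝ) 1, ∀ t ∈ T, γ s = δ t → t = 0) : InjOn (concat γ δ) T := by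
  intro s hs t ht h
  wlog hst : s ≤ t generalizing s t
  · exact (this ht hs h.symm (le_of_not_ge hst)).symm
  obtain ⟨hs0, hs1⟩ := hT hs
  obtain ⟨ht0, ht1⟩ := hT ht
  rcases le_total t (1 / 2) with ht2 | ht2
  · rw [concat_of_le ht2, concat_of_le (hst.trans ht2)] at h
    linarith [hγ ⟨by linarith, by linarith⟩ ⟨by linarith, by linarith⟩ h]
  rw [concat_of_ge hγδ ht2] at h
  rcases le_total s (1 / 2) with hs2 | hs2
  · rw [concat_of_le hs2] at h
    have h0 := hmeet _ ⟨by linarith, by linarith⟩ _ (hT' t ht ht2) h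
    rw [h0, ← hγδ] at h
    linarith [hγ ⟨by linarith, by linarith⟩ ⟨by linarith, by linarith⟩ h]
  · rw [concat_of_ge hγδ hs2] at h
    linarith [hδ ⟨by linarith, by linarith⟩ ⟨by linarith, by linarith⟩ h]

end Concat

section Gluing

variable {X : Type*} [TopologicalSpace X] {Y A Z : Set X} {γ δ : ℝ → X} {a b v : X}

/-- If `v ∈ S`, then `S ∩ Y` is the image of `S` under the retraction of `Y ∪ A` to `Y` that
collapses `A` to `v`. -/
lemma isPreconnected_inter_of_inter_eq_singleton {S : Set X} (hS : IsPreconnected S)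
    (hSYA : S ⊆ Y ∪ A) (hY : IsClosed Y) (hA : IsClosed A) (hv : Y ∩ A = {v}) :
    IsPreconnected (S ∩ Y) := by
  classical
  by_cases hvS : v ∈ S
  · let r : X → X := fun x => if x ∈ Y then x else v
    have hrY : EqOn r id Y := fun x hx => if_pos hx
    have hrA : EqOn r (fun _ => v) A := fun x hxA => by
      by_cases hxY : x ∈ Y
      · exact (hrY hxY).trans (hv.le ⟨hxY, hxA⟩)
      · exact if_neg hxY
    have hr : ContinuousOn r (Y ∪ A) := ContinuousOn.union_of_isClosed
      (continuousOn_id.congr hrY) (continuousOn_const.congr hrA) hY hA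
    have himage : r '' S = S ∩ Y := by
      refine Subset.antisymm ?_ fun x hx => ⟨x, hx.1, hrY hx.2⟩
      rintro _ ⟨x, hxS, rfl⟩
      rcases hSYA hxS with hx | hx
      · exact (hrY hx).symm ▸ ⟨hxS, hx⟩
      · exact (hrA hx).symm ▸ ⟨hvS, (hv.ge rfl).1⟩
    exact himage ▸ hS.image r (hr.mono hSYA)
  · have hdisj : S ∩ (Y ∩ A) = ∅ := by rwa [hv, inter_singleton_eq_empty]
    rcases isPreconnected_iff_subset_of_disjoint_closed.1 hS Y A hY hA hSYA hdisj with h | h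
    · rwa [inter_eq_left.2 h]
    · rw [← inter_eq_left.2 h, inter_assoc, inter_comm A, hdisj]
      exact isPreconnected_empty

lemma continuousOn_concat (hγδ : γ 1 = δ 0) (hγ : ContinuousOn γ (Icc 0 1))
    (hδ : ContinuousOn δ (Icc 0 1)) : ContinuousOn (concat γ δ) (Icc 0 1) := by
  rw [← Icc_union_Icc_eq_Icc (b := (1 / 2 : ℝ)) (by norm_num) (by norm_num)]
  refine ContinuousOn.union_of_isClosed ?_ ?_ isClosed_Icc isClosed_Icc
  · refine (hγ.comp (f := fun t => 2 * t) (by fun_prop) fun t ht => ?_).congr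
      fun t ht => concat_of_le ht.2
    constructor <;> linarith [ht.1, ht.2]
  · refine (hδ.comp (f := fun t => 2 * t - 1) (by fun_prop) fun t ht => ?_).congr
      fun t ht => concat_of_ge hγδ ht.1
    constructor <;> linarith [ht.1, ht.2]

lemma IsMinimalArc.source_mem (h : IsMinimalArc Y γ a b) : a ∈ Y :=
  h.image_subset ⟨0, left_mem_Icc.2 zero_le_one, h.source⟩

lemma IsMinimalArc.target_mem (h : IsMinimalArc Y γ a b) : b ∈ Y :=
  h.image_subset ⟨1, right_mem_Icc.2 zero_le_one, h.target⟩

lemma IsMinimalArc.mono (h : IsMinimalArc Y γ a b) (hYZ : Y ⊆ Z)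
    (hZ : ∀ S ⊆ Z, IsPreconnected S → IsPreconnected (S ∩ Y)) : IsMinimalArc Z γ a b where
  __ := h
  image_subset := h.image_subset.trans hYZ
  minimal S hSZ hS ha hb := (h.minimal (S ∩ Y) inter_subset_right (hZ S hSZ hS)
    ⟨ha, h.source_mem⟩ ⟨hb, h.target_mem⟩).trans inter_subset_left

lemma IsMinimalArc.concat (hγ : IsMinimalArc Z γ a v) (hδ : IsMinimalArc Z δ v b)
    (hmeet : γ '' Icc 0 1 ∩ δ '' Icc 0 1 ⊆ {v})
    (hv : ∀ S ⊆ Z, IsPreconnected S → a ∈ S → b ∈ S → v ∈ S) :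
    IsMinimalArc Z (concat γ δ) a b := by
  have hγδ : γ 1 = δ 0 := hγ.target.trans hδ.source.symm
  refine ⟨continuousOn_concat hγδ hγ.continuousOn hδ.continuousOn, ?_,
    concat_zero.trans hγ.source, concat_one.trans hδ.target,
    (image_concat_subset hγδ).trans (union_subset hγ.image_subset hδ.image_subset),
    fun S hSZ hS ha hb => (image_concat_subset hγδ).trans (union_subset
      (hγ.minimal S hSZ hS ha (hv S hSZ hS ha hb)) (hδ.minimal S hSZ hS (hv S hSZ hS ha hb) hb))⟩
  refine injOn_concat Subset.rfl (fun t ht h => ⟨by linarith, by linarith [ht.2]⟩) hγδ hγ.injOn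
    hδ.injOn fun s hs t ht hst => hδ.injOn ht (left_mem_Icc.2 zero_le_one) ?_
  exact (hmeet ⟨⟨s, hs, hst⟩, t, ht, rfl⟩ : δ t = v).trans hδ.source.symm

lemma UniquelyArcConnected.exists_isMinimalArc_union (hYu : UniquelyArcConnected Y)
    (hAu : UniquelyArcConnected A) (hY : IsClosed Y) (hA : IsClosed A) (hv : Y ∩ A = {v})
    (ha : a ∈ Y) (hb : b ∈ Y ∪ A) (hab : a ≠ b) : ∃ γ, IsMinimalArc (Y ∪ A) γ a b := by
  obtain ⟨hvY, hvA⟩ : v ∈ Y ∩ A := hv.ge rfl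
  have hcutY (S : Set X) (hSYA : S ⊆ Y ∪ A) (hS : IsPreconnected S) : IsPreconnected (S ∩ Y) :=
    isPreconnected_inter_of_inter_eq_singleton hS hSYA hY hA hv
  have hcutA (S : Set X) (hSYA : S ⊆ Y ∪ A) (hS : IsPreconnected S) : IsPreconnected (S ∩ A) :=
    isPreconnected_inter_of_inter_eq_singleton hS (union_comm Y A ▸ hSYA) hA hY
      (inter_comm Y A ▸ hv)
  by_cases hbY : b ∈ Y
  · obtain ⟨γ, hγ⟩ := hYu a ha b hbY hab
    exact ⟨γ, hγ.mono subset_union_left hcutY⟩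
  have hbA : b ∈ A := hb.resolve_left hbY
  obtain ⟨δ, hδ⟩ := hAu v hvA b hbA (ne_of_mem_of_not_mem hvY hbY)
  rcases eq_or_ne a v with rfl | hav
  · exact ⟨δ, hδ.mono subset_union_right hcutA⟩
  obtain ⟨γ, hγ⟩ := hYu a ha v hvY hav
  refine ⟨_, (hγ.mono subset_union_left hcutY).concat (hδ.mono subset_union_right hcutA)
    ((inter_subset_inter hγ.image_subset hδ.image_subset).trans hv.le) fun S hSYA hS haS hbS => ?_⟩
  obtain ⟨w, hwS, hw⟩ := isPreconnected_closed_iff.1 hS Y A hY hA hSYA ⟨a, haS, ha⟩ ⟨b, hbS, hbA⟩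
  rw [hv] at hw
  exact hw ▸ hwS

lemma UniquelyArcConnected.union (hYu : UniquelyArcConnected Y) (hAu : UniquelyArcConnected A)
    (hY : IsClosed Y) (hA : IsClosed A) (hv : Y ∩ A = {v}) : UniquelyArcConnected (Y ∪ A) := by
  rintro a (ha | ha) b hb hab
  · exact hYu.exists_isMinimalArc_union hAu hY hA hv ha hb hab
  · rw [union_comm] at hb ⊢
    exact hAu.exists_isMinimalArc_union hYu hA hY (inter_comm Y A ▸ hv) ha hb hab

lemma UniquelyArcConnected.isPreconnected_inter (hX : UniquelyArcConnected (univ : Set X))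
    {S T : Set X} (hS : IsPreconnected S) (hT : IsPreconnected T) : IsPreconnected (S ∩ T) := by
  refine isPreconnected_of_forall_pair fun a ha b hb => ?_
  rcases eq_or_ne a b with rfl | hab
  · exact ⟨{a}, singleton_subset_iff.2 ha, rfl, rfl, isPreconnected_singleton⟩
  obtain ⟨γ, hγ⟩ := hX a (mem_univ _) b (mem_univ _) hab
  exact ⟨γ '' Icc 0 1, subset_inter (hγ.minimal S (subset_univ _) hS ha.1 hb.1)
    (hγ.minimal T (subset_univ _) hT ha.2 hb.2), ⟨0, left_mem_Icc.2 zero_le_one, hγ.source⟩,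
    ⟨1, right_mem_Icc.2 zero_le_one, hγ.target⟩, hγ.isPreconnected_image le_rfl le_rfl⟩

lemma exists_isSimpleClosedCurve [T2Space X] (hγ : ContinuousOn γ (Icc 0 1)) (h01 : γ 0 = γ 1)
    (hinj : InjOn γ (Ico 0 1)) : ∃ S : Set X, IsSimpleClosedCurve S := by
  have : Fact ((0 : ℝ) < 1) := ⟨one_pos⟩
  let F : AddCircle (1 : ℝ) → X := AddCircle.liftIco 1 0 γ
  have hF : Continuous F := AddCircle.liftIco_zero_continuous h01 hγ
  have hFinj : Injective F := by
    intro u v huv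
    obtain ⟨s, hs, rfl⟩ := AddCircle.eq_coe_Ico u
    obtain ⟨t, ht, rfl⟩ := AddCircle.eq_coe_Ico v
    simp only [F, AddCircle.liftIco_zero_coe_apply hs, AddCircle.liftIco_zero_coe_apply ht] at huv
    rw [hinj hs ht huv]
  let e : AddCircle (1 : ℝ) ≃ₜ Circle := AddCircle.homeomorphCircle one_ne_zero
  exact ⟨range F, ⟨(hF.isClosedEmbedding hFinj).isEmbedding.toHomeomorph.symm.trans e⟩⟩

end Gluing

section ArcSystem

variable {X : Type*} [TopologicalSpace X] {γ : ℝ → X} {A Y C : Set X}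

/-- Finitely many parametrized arcs covering the space, any two of which meet only in common
endpoints. The arcs are indexed by their images, `G A` parametrizing `A`. -/
structure IsArcSystem (𝒜 : Finset (Set X)) (G : Set X → ℝ → X) : Prop where
  isArcParam : ∀ A ∈ 𝒜, IsArcParam (G A) A
  sUnion_eq : ⋃₀ (𝒜 : Set (Set X)) = univ
  inter_subset : ∀ A ∈ 𝒜, ∀ B ∈ 𝒜, A ≠ B → A ∩ B ⊆ {G A 0, G A 1}

lemma IsArcSystem.exists_mem {𝒜 : Finset (Set X)} {G : Set X → ℝ → X} (h : IsArcSystem 𝒜 G)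
    (x : X) : ∃ A ∈ 𝒜, x ∈ A :=
  h.sUnion_eq.ge (mem_univ x)

variable [T2Space X]

lemma UniquelyArcConnected.exists_isSimpleClosedCurve (hYu : UniquelyArcConnected Y)
    (g : IsArcParam γ A) (hmeet : Y ∩ A ⊆ {γ 0, γ 1}) (h0 : γ 0 ∈ Y) (h1 : γ 1 ∈ Y) :
    ∃ S : Set X, IsSimpleClosedCurve S := by
  have h0I : (0 : ℝ) ∈ Icc (0 : ℝ) 1 := left_mem_Icc.2 zero_le_one
  have h1I : (1 : ℝ) ∈ Icc (0 : ℝ) 1 := right_mem_Icc.2 zero_le_one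
  obtain ⟨δ, hδ⟩ := hYu _ h1 _ h0 fun h => one_ne_zero (g.injOn h1I h0I h)
  have hγδ : γ 1 = δ 0 := hδ.source.symm
  refine _root_.exists_isSimpleClosedCurve (continuousOn_concat hγδ g.continuousOn hδ.continuousOn)
    (by rw [concat_zero, concat_one, hδ.target])
    (injOn_concat Ico_subset_Icc_self (fun t ht h => ⟨by linarith, by linarith [ht.2]⟩) hγδ g.injOn
      hδ.injOn fun s hs t ht hst => ?_)
  have htI : t ∈ Icc (0 : ℝ) 1 := Ico_subset_Icc_self ht
  have hδY : δ t ∈ Y := hδ.image_subset (mem_image_of_mem δ htI)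
  rcases hmeet ⟨hδY, hst ▸ g.mem hs⟩ with h | h
  · exact absurd (hδ.injOn htI h1I (h.trans hδ.target.symm)) ht.2.ne
  · exact hδ.injOn htI h0I (h.trans hγδ)

lemma UniquelyArcConnected.union_arc (hYu : UniquelyArcConnected Y) (g : IsArcParam γ A)
    (hX : ∀ S : Set X, ¬ IsSimpleClosedCurve S) (hY : IsClosed Y) (hne : (Y ∩ A).Nonempty)
    (hmeet : Y ∩ A ⊆ {γ 0, γ 1}) : UniquelyArcConnected (Y ∪ A) := by
  have hnot : ¬(γ 0 ∈ Y ∧ γ 1 ∈ Y) := fun h =>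
    let ⟨S, hS⟩ := hYu.exists_isSimpleClosedCurve g hmeet h.1 h.2
    hX S hS
  have hsub : (Y ∩ A).Subsingleton := by
    intro p hp q hq
    rcases hmeet hp with rfl | rfl <;> rcases hmeet hq with rfl | rfl
    exacts [rfl, absurd ⟨hp.1, hq.1⟩ hnot, absurd ⟨hq.1, hp.1⟩ hnot, rfl]
  obtain ⟨v, hv⟩ := hne
  exact hYu.union g.uniquelyArcConnected hY g.isClosed (hsub.eq_singleton_of_mem hv)

namespace IsArcParam

lemma ordConnected_preimage_of_uniquelyArcConnected (g : IsArcParam γ A)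
    (hX : UniquelyArcConnected (univ : Set X)) (hC : IsPreconnected C) :
    OrdConnected (Icc 0 1 ∩ γ ⁻¹' C) := by
  have hpre : Icc 0 1 ∩ γ ⁻¹' C = Icc 0 1 ∩ γ ⁻¹' (C ∩ A) :=
    ext fun t => and_congr_right fun ht => (and_iff_left (g.mem ht)).symm
  exact hpre ▸ g.ordConnected_preimage inter_subset_right
    (hX.isPreconnected_inter hC g.isPreconnected)

lemma image_uIcc_subset_hull (g : IsArcParam γ A) (hX : UniquelyArcConnected (univ : Set X))
    {s t : ℝ} (hs : s ∈ Icc (0 : ℝ) 1) (ht : t ∈ Icc (0 : ℝ) 1) :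
    γ '' uIcc s t ⊆ hull (γ s) (γ t) := by
  rintro _ ⟨u, hu, rfl⟩ S ⟨hS, hsS, htS⟩
  exact ((g.ordConnected_preimage_of_uniquelyArcConnected hX hS).uIcc_subset ⟨hs, hsS⟩ ⟨ht, htS⟩
    hu).2

lemma exists_endpoint_mem_hull (g : IsArcParam γ A) (hX : UniquelyArcConnected (univ : Set X))
    {p x : X} (hp : p ∈ A) (hx : x ∈ A) : ∃ e ∈ ({γ 0, γ 1} : Set X), e ≠ p ∧ x ∈ hull p e := by
  obtain ⟨t, ht, rfl⟩ := g.image_eq.ge hp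
  obtain ⟨s, hs, rfl⟩ := g.image_eq.ge hx
  have h0 : (0 : ℝ) ∈ Icc (0 : ℝ) 1 := left_mem_Icc.2 zero_le_one
  have h1 : (1 : ℝ) ∈ Icc (0 : ℝ) 1 := right_mem_Icc.2 zero_le_one
  by_cases hst : s ≤ t ∧ t ≠ 0
  · exact ⟨γ 0, mem_insert _ _, fun h => hst.2 (g.injOn h0 ht h).symm,
      g.image_uIcc_subset_hull hX ht h0 (mem_image_of_mem γ (mem_uIcc.2 (Or.inr ⟨hs.1, hst.1⟩)))⟩
  · have hts : t ≤ s ∧ t ≠ 1 := by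
      rcases not_and_or.1 hst with h | h
      · exact ⟨(not_le.1 h).le, ((not_le.1 h).trans_le hs.2).ne⟩
      · exact ⟨(not_not.1 h).trans_le hs.1, (not_not.1 h).trans_ne zero_ne_one⟩
    exact ⟨γ 1, mem_insert_of_mem _ rfl, fun h => hts.2 (g.injOn h1 ht h).symm,
      g.image_uIcc_subset_hull hX ht h1 (mem_image_of_mem γ (mem_uIcc.2 (Or.inl ⟨hts.1, hs.2⟩)))⟩

lemma frontier_inter_interior_subset (g : IsArcParam γ A)
    (hX : UniquelyArcConnected (univ : Set X)) (hC : IsPreconnected C) :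
    frontier C ∩ interior A ⊆ {γ (sInf (Icc 0 1 ∩ γ ⁻¹' C)), γ (sSup (Icc 0 1 ∩ γ ⁻¹' C))} := by
  rintro x ⟨hxC, hxA⟩
  obtain ⟨t, ht, rfl⟩ := g.image_eq.ge (interior_subset hxA)
  set I : Set ℝ := Icc 0 1 ∩ γ ⁻¹' C
  have hmap : map γ (𝓝[Icc 0 1] t) = 𝓝 (γ t) :=
    g.map_nhdsWithin ht (mem_interior_iff_mem_nhds.1 hxA)
  rw [frontier_eq_closure_inter_closure, mem_inter_iff, mem_closure_iff_frequently,
    mem_closure_iff_frequently, ← hmap, frequently_map, frequently_map] at hxC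
  have htI : t ∈ closure I := mem_closure_iff_frequently.2
    ((frequently_nhdsWithin_iff.1 hxC.1).mono fun u hu => ⟨hu.2, hu.1⟩)
  have hIne : I.Nonempty := closure_nonempty_iff.1 ⟨t, htI⟩
  have hbelow : BddBelow I := bddBelow_Icc.mono inter_subset_left
  have habove : BddAbove I := bddAbove_Icc.mono inter_subset_left
  have hle : sInf I ≤ t := closure_minimal (fun u hu => csInf_le hbelow hu) isClosed_Ici htI
  have hge : t ≤ sSup I := closure_minimal (fun u hu => le_csSup habove hu) isClosed_Iic htI
  by_contra hne
  rw [mem_insert_iff, mem_singleton_iff, not_or] at hne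
  obtain ⟨r, hr, hrt⟩ := exists_lt_of_csInf_lt hIne (hle.lt_of_ne fun h => hne.1 (h ▸ rfl))
  obtain ⟨s, hs, hts⟩ := exists_lt_of_lt_csSup hIne (hge.lt_of_ne fun h => hne.2 (h ▸ rfl))
  have hnear : ∀ᶠ u in 𝓝[Icc 0 1] t, γ u ∈ C := by
    filter_upwards [mem_nhdsWithin_of_mem_nhds (Icc_mem_nhds hrt hts)] with u hu
    exact ((g.ordConnected_preimage_of_uniquelyArcConnected hX hC).out hr hs hu).2
  exact hxC.2 (hnear.mono fun u hu => not_not.2 hu)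

end IsArcParam

namespace IsArcSystem

variable {𝒜 ℬ : Finset (Set X)} {G : Set X → ℝ → X}

lemma isClosed_sUnion (h : IsArcSystem 𝒜 G) (hℬ : ℬ ⊆ 𝒜) : IsClosed (⋃₀ (ℬ : Set (Set X))) := by
  rw [sUnion_eq_biUnion]
  exact ℬ.finite_toSet.isClosed_biUnion fun A hA => (h.isArcParam A (hℬ hA)).isClosed

lemma eventually_mem (h : IsArcSystem 𝒜 G) (p : X) : ∀ᶠ x in 𝓝 p, ∀ A ∈ 𝒜, x ∈ A → p ∈ A := by
  refine (Filter.eventually_all_finset 𝒜).2 fun A hA => ?_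
  by_cases hp : p ∈ A
  · exact Eventually.of_forall fun _ _ => hp
  · filter_upwards [(h.isArcParam A hA).isClosed.isOpen_compl.mem_nhds hp] with x hx hxA
    exact absurd hxA hx

lemma mem_nhds (h : IsArcSystem 𝒜 G) {p : X} (hA : A ∈ 𝒜) (hp : p ∈ A)
    (hends : p ∉ ({G A 0, G A 1} : Set X)) : A ∈ 𝓝 p := by
  filter_upwards [h.eventually_mem p] with x hx
  obtain ⟨B, hB, hxB⟩ := h.exists_mem x
  by_contra hxA
  exact hends (h.inter_subset A hA B hB (fun hAB => hxA (hAB ▸ hxB)) ⟨hp, hx B hB hxB⟩)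

lemma exists_star (h : IsArcSystem 𝒜 G) (hX : UniquelyArcConnected (univ : Set X)) (p : X) :
    ∃ S : Finset X, p ∉ S ∧ (⋃ s ∈ S, hull p s) ∈ 𝓝 p := by
  classical
  refine ⟨(𝒜.biUnion fun A => {G A 0, G A 1}).erase p, Finset.notMem_erase _ _, ?_⟩
  filter_upwards [h.eventually_mem p] with x hx
  obtain ⟨A, hA, hxA⟩ := h.exists_mem x
  obtain ⟨e, he, hep, hxe⟩ := (h.isArcParam A hA).exists_endpoint_mem_hull hX (hx A hA hxA) hxA
  refine mem_biUnion (Finset.mem_coe.2 (Finset.mem_erase.2 ⟨hep, ?_⟩)) hxe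
  exact Finset.mem_biUnion.2 ⟨A, hA, by simpa using he⟩

lemma finite_frontier (h : IsArcSystem 𝒜 G) (hX : UniquelyArcConnected (univ : Set X))
    (hC : IsPreconnected C) : (frontier C).Finite := by
  let I (A : Set X) : Set ℝ := Icc 0 1 ∩ G A ⁻¹' C
  refine (𝒜.finite_toSet.biUnion (t := fun A =>
    ({G A 0, G A 1} ∪ {G A (sInf (I A)), G A (sSup (I A))} : Set X)) fun A _ =>
      toFinite _).subset fun x hx => ?_
  obtain ⟨A, hA, hxA⟩ := h.exists_mem x
  refine mem_biUnion hA (or_iff_not_imp_left.2 fun hends => ?_)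
  exact (h.isArcParam A hA).frontier_inter_interior_subset hX hC
    ⟨hx, mem_interior_iff_mem_nhds.2 (h.mem_nhds hA hxA hends)⟩

lemma exists_notMem_inter_nonempty [PreconnectedSpace X] (h : IsArcSystem 𝒜 G) (hℬ : ℬ ⊆ 𝒜)
    (hne : (⋃₀ (ℬ : Set (Set X))).Nonempty) (huniv : ⋃₀ (ℬ : Set (Set X)) ≠ univ) :
    ∃ A ∈ 𝒜, A ∉ ℬ ∧ (⋃₀ (ℬ : Set (Set X)) ∩ A).Nonempty := by
  classical
  have hcover : ⋃₀ (ℬ : Set (Set X)) ∪ ⋃₀ ((𝒜 \ ℬ : Finset (Set X)) : Set (Set X)) = univ := by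
    rw [← sUnion_union, ← Finset.coe_union, Finset.union_sdiff_of_subset hℬ, h.sUnion_eq]
  obtain ⟨z, hz⟩ := (ne_univ_iff_exists_notMem _).1 huniv
  have hz' := (hcover.ge (mem_univ z)).resolve_left hz
  obtain ⟨v, -, hvℬ, A, hA, hvA⟩ := isPreconnected_closed_iff.1 isPreconnected_univ _ _
    (h.isClosed_sUnion hℬ) (h.isClosed_sUnion Finset.sdiff_subset) hcover.ge
    (by rwa [univ_inter]) ⟨z, mem_univ z, hz'⟩
  rw [Finset.mem_coe, Finset.mem_sdiff] at hA
  exact ⟨A, hA.1, hA.2, v, hvℬ, hvA⟩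

/-- A maximal nonempty subfamily of the arcs whose union is uniquely arc connected covers the
space. -/
lemma uniquelyArcConnected_univ [ConnectedSpace X] (h : IsArcSystem 𝒜 G)
    (hX : ∀ S : Set X, ¬ IsSimpleClosedCurve S) : UniquelyArcConnected (univ : Set X) := by
  classical
  let families : Finset (Finset (Set X)) := 𝒜.powerset.filter fun ℬ =>
    (⋃₀ (ℬ : Set (Set X))).Nonempty ∧ UniquelyArcConnected (⋃₀ (ℬ : Set (Set X)))
  have hfamilies : families.Nonempty := by
    obtain ⟨x⟩ := (inferInstance : Nonempty X)
    obtain ⟨A, hA, hx⟩ := h.exists_mem x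
    refine ⟨{A}, Finset.mem_filter.2 ⟨by simpa using hA, ?_⟩⟩
    rw [Finset.coe_singleton, sUnion_singleton]
    exact ⟨⟨x, hx⟩, (h.isArcParam A hA).uniquelyArcConnected⟩
  obtain ⟨ℬ, hℬmax⟩ := families.exists_maximal hfamilies
  obtain ⟨hℬ, hne, hu⟩ := Finset.mem_filter.1 hℬmax.prop
  rw [Finset.mem_powerset] at hℬ
  by_contra hnot
  obtain ⟨A, hA, hAℬ, hmeet⟩ :=
    h.exists_notMem_inter_nonempty hℬ hne fun huniv => hnot (huniv ▸ hu)
  have hends : ⋃₀ (ℬ : Set (Set X)) ∩ A ⊆ {G A 0, G A 1} := by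
    rintro p ⟨⟨B, hB, hpB⟩, hpA⟩
    exact h.inter_subset A hA B (hℬ hB) (fun hAB => hAℬ (hAB ▸ hB)) ⟨hpA, hpB⟩
  have hu' := hu.union_arc (h.isArcParam A hA) hX (h.isClosed_sUnion hℬ) hmeet hends
  rw [union_comm, ← sUnion_insert, ← Finset.coe_insert] at hu'
  have hins : insert A ℬ ∈ families := Finset.mem_filter.2 ⟨Finset.mem_powerset.2
    (Finset.insert_subset hA hℬ), hne.mono (sUnion_mono (by simp)), hu'⟩
  exact hAℬ (hℬmax.le_of_ge hins (Finset.subset_insert A ℬ) (Finset.mem_insert_self A ℬ))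

lemma treeLike [ConnectedSpace X] (h : IsArcSystem 𝒜 G)
    (hX : ∀ S : Set X, ¬ IsSimpleClosedCurve S) : TreeLike X where
  uniquelyArcConnected := h.uniquelyArcConnected_univ hX
  exists_star := h.exists_star (h.uniquelyArcConnected_univ hX)
  finite_frontier _ hC := h.finite_frontier (h.uniquelyArcConnected_univ hX) hC

end IsArcSystem

end ArcSystem

lemma IsTree.treeLike {X : Type*} [MetricSpace X] (hX : IsTree X) : TreeLike X := by
  obtain ⟨-, _, ⟨𝒜, harc, hcover, hmeet⟩, hcurve⟩ := hX
  choose! G hG using fun A hA => (harc A hA).exists_isArcParam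
  exact IsArcSystem.treeLike ⟨hG, hcover, fun A hA B hB hne p hp =>
    (hG A hA).eq_of_isArcEndpoint (hmeet A hA B hB hne p hp).1⟩ hcurve

section INPairs

variable {X : Type*} [TopologicalSpace X] {f : X → X} {x y : X}

lemma INPair.symm (h : INPair f x y) : INPair f y x := by
  intro V hV U hU m
  obtain ⟨I, hI, hindep⟩ := h U hU V hV m
  refine ⟨I, hI, fun J hJI hJ s => ?_⟩
  have hswap (j : ℕ) : (if s j then V else U) = if !s j then U else V := by
    cases s j <;> rfl
  simpa only [hswap] using hindep J hJI hJ fun j => !s j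

lemma INPairOn.inPair {Y : Set X} (h : INPairOn f Y x y) : INPair f x y := by
  intro U hU V hV m
  obtain ⟨I, hI, hindep⟩ := h.2.2 U hU V hV m
  exact ⟨I, hI, fun J hJI hJ s => (hindep J hJI hJ s).mono inter_subset_right⟩

end INPairs

theorem INPair_on_chainRecurrent_infinite_omegaLimits_general {X : Type*} [MetricSpace X]
    (hX : IsTree X) (f : X → X) (hf : Continuous f) (h0 : topEntropy f = 0)
    {x y : X} (hxy : INPair f x y) (hne : x ≠ y) :
    (omegaLimitSet f x).Infinite ∧ (omegaLimitSet f y).Infinite := by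
  have : CompactSpace X := hX.1
  exact ⟨fun hfin => (hxy.hasHorseshoe hX.treeLike hf hne hfin).topEntropy_ne_zero h0,
    fun hfin => (hxy.symm.hasHorseshoe hX.treeLike hf hne.symm hfin).topEntropy_ne_zero h0⟩

/-- For a zero entropy tree map, both members of a non-diagonal IN-pair of
the restricted system `(CR(f), f|_{CR(f)})` have infinite ω-limit sets. -/
theorem INPair_on_chainRecurrent_infinite_omegaLimits {X : Type*} [MetricSpace X]
    (hX : IsTree X) (f : X → X) (hf : Continuous f) (h0 : topEntropy f = 0)
    {x y : X} (hxy : INPairOn f (chainRecurrentSet f) x y) (hne : x ≠ y) :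
    (omegaLimitSet f x).Infinite ∧ (omegaLimitSet f y).Infinite :=
  INPair_on_chainRecurrent_infinite_omegaLimits_general hX f hf h0 hxy.inPair hne
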